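/- Let p and q be prime integers with p ≠ q, k ≥ 0 an integer, and let Δ ⊂ ℝ^d be a lattice simplex of dimension d which has δ-polynomial 1 + t^{k+1} + t^{2(k+1)} + ⋯ + t^{(pq−1)(k+1)} and is not a lattice pyramid over any lower-dimensional lattice simplex. Then Δ is unimodularly equivalent to one of the following five simplices: (1) Δ(A₁) where A₁ = (1, …, 1, pq) has pq(k+1) − 2 entries equal to 1 followed by pq (here d = pq(k+1) − 1); (2) Δ(B₁, C₁) where B₁ = (1, …, 1, p) has p(k+1) − 1 entries equal to 1 followed by p (so s = p(k+1)), and C₁ = (q, …, q, 1, …, 1, q) has p(k+1) entries equal to q, then pq(k+1) − 2 entries equal to 1, then q (here d = p(q+1)(k+1) − 1); (3) Δ(B₂, C₂) where B₂ = (1, …, 1, q) has q(k+1) − 1 entries equal to 1 followed by q (so s = q(k+1)), and C₂ = (p, …, p, 1, …, 1, p) has q(k+1) entries equal to p, then pq(k+1) − 2 entries equal to 1, then p (here d = (p+1)q(k+1) − 1); (4) Δ(A₂) where A₂ = (1, …, 1, p, …, p, pq) has p(k+1) − 1 entries equal to 1, then (pq−1)(k+1) − 1 entries equal to p, then pq (here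 d = (pq + p − 1)(k+1) − 1); (5) Δ(A₃) where A₃ = (1, …, 1, q, …, q, pq) has q(k+1) − 1 entries equal to 1, then (pq−1)(k+1) − 1 entries equal to q, then pq (here d = (pq + q − 1)(k+1) − 1). -/

import Mathlib

open scoped BigOperators Pointwise

/-- `Δ ⊆ ℝ^d` is a lattice simplex of dimension `d`:
the convex hull of `d+1` affinely independent points of `ℤ^d`. -/
def IsLatticeSimplex {d : ℕ} (Δ : Set (Fin d → ℝ)) : Prop :=
  ∃ V : Fin (d+1) → (Fin d → ℤ),
    AffineIndependent ℝ (fun i => (fun j => ((V i j : ℤ) : ℝ))) ∧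
    Δ = convexHull ℝ (Set.range (fun i => (fun j => ((V i j : ℤ) : ℝ))))

/-- The number of lattice points of a subset of `ℝ^d`. -/
noncomputable def latticePointCount {d : ℕ} (S : Set (Fin d → ℝ)) : ℕ :=
  Set.ncard {x : Fin d → ℤ | (fun j => ((x j : ℤ) : ℝ)) ∈ S}

/-- `Δ` has `δ`-polynomial `1 + t^(k+1) + t^(2(k+1)) + ⋯ + t^((v-1)(k+1))`:
the coefficientwise form of the Ehrhart series identity. -/
def HasDeltaPolySimplex (d v k : ℕ) (Δ : Set (Fin d → ℝ)) : Prop :=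
  ∀ n : ℕ, latticePointCount ((n : ℝ) • Δ) =
    ∑ j ∈ Finset.range v,
      if j * (k+1) ≤ n then Nat.choose (n - j * (k+1) + d) d else 0

/-- Unimodular equivalence of subsets of `ℝ^d`. -/
def UnimodEquiv {d : ℕ} (P Q : Set (Fin d → ℝ)) : Prop :=
  ∃ U : Matrix (Fin d) (Fin d) ℤ, ∃ w : Fin d → ℤ,
    IsUnit U.det ∧
    Q = (fun x : Fin d → ℝ =>
      Matrix.vecMul x (U.map (fun a : ℤ => (a : ℝ))) + (fun j => ((w j : ℤ) : ℝ))) '' P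

/-- The lattice pyramid over `Q ⊆ ℝ^e`. -/
def Pyr {e : ℕ} (Q : Set (Fin e → ℝ)) : Set (Fin (e+1) → ℝ) :=
  convexHull ℝ
    (((fun x : Fin e → ℝ => Fin.snoc x 0) '' Q) ∪ {Fin.snoc (0 : Fin e → ℝ) 1})

/-- The last entry of a finite integer sequence (junk value `0` if empty). -/
def lastEntry {n : ℕ} (A : Fin n → ℤ) : ℤ :=
  if h : 0 < n then A ⟨n-1, by omega⟩ else 0

/-- The last row `(a_d - a_1, …, a_d - a_{d-1}, a_d)` of the vertex matrix of `Δ(A)`. -/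
def rowA {d : ℕ} (A : Fin d → ℤ) : Fin d → ℝ :=
  fun j => ((lastEntry A - if (j : ℕ) + 1 < d then A j else 0 : ℤ) : ℝ)

/-- The simplex `Δ(A)`: the convex hull of the origin, the unit vectors
`e_1, …, e_{d-1}` and the row `(a_d - a_1, …, a_d - a_{d-1}, a_d)`. -/
def simplexA {d : ℕ} (A : Fin d → ℤ) : Set (Fin d → ℝ) :=
  convexHull ℝ (insert 0 (Set.range (fun i : Fin d =>
    if (i : ℕ) + 1 < d then (Pi.single i 1 : Fin d → ℝ) else rowA A)))

/-- The row `(b_s - b_1, …, b_s - b_{s-1}, b_s, 0, …, 0)` of the vertex matrix of `Δ(B,C)`. -/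
def rowB {d : ℕ} (s : ℕ) (B : Fin s → ℤ) : Fin d → ℝ :=
  fun j =>
    if h : (j : ℕ) + 1 < s then ((lastEntry B - B ⟨(j : ℕ), by omega⟩ : ℤ) : ℝ)
    else if (j : ℕ) + 1 = s then ((lastEntry B : ℤ) : ℝ)
    else 0

/-- The simplex `Δ(B,C)`: the convex hull of the origin, the unit vectors
`e_1, …, e_{s-1}`, the row `(b_s - b_1, …, b_s - b_{s-1}, b_s, 0, …, 0)`,
the unit vectors `e_{s+1}, …, e_{d-1}` and the row `(c_d - c_1, …, c_d - c_{d-1}, c_d)`. -/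
def simplexBC {d : ℕ} (s : ℕ) (B : Fin s → ℤ) (C : Fin d → ℤ) : Set (Fin d → ℝ) :=
  convexHull ℝ (insert 0 (Set.range (fun i : Fin d =>
    if (i : ℕ) + 1 = s then rowB s B
    else if (i : ℕ) + 1 = d then rowA C
    else (Pi.single i 1 : Fin d → ℝ))))

/-!
A lattice simplex is determined up to unimodular equivalence by the finite group
`G ⊆ (ℝ / ℤ)^(d+1)` of the classes of the barycentric coefficient vectors of the lattice points in
its multiples, up to a permutation of the vertices. Let the height of `g ∈ G` be the sum of the
representatives of its coordinates in `[0, 1)`. A lattice point of `nΔ` is an element of `G` of some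
height `h ≤ n` together with nonnegative integral parts of sum `n - h`, so the hypothesis on the
`δ`-polynomial says that the heights of the elements of `G` are `0, c, …, (pq - 1)c` with
`c = k + 1`, each attained once. In particular `G` is cyclic of order `pq`. Moreover a
coordinate vanishing on all of `G` would make `Δ` a pyramid.

Since `height g + height (-g)` is the number of nonzero coordinates of `g`, the element `h` of
height `c` and order `n` has exactly `n * c` nonzero coordinates, all equal to `1 / n`. If `n = pq`,
it generates `G`. If `n` is one of the two primes and `m` is the other one, each coordinate outside
the support of `h` is at least `1 / m` on every element outside `⟨h⟩`. This bounds `d + 1` between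
`(nm - 1 + n) * c` and `(nm + n) * c`, and as `c ∣ d + 1` only these two values are possible; in
both cases the element of height `n * c` attains its lower bounds and is thus known.
-/

section Circle

/-- The representative in `[0, 1)` of a point of the circle `ℝ / ℤ`. -/
noncomputable def unitRep (x : UnitAddCircle) : ℝ := AddCircle.equivIco 1 0 x

/-- The class of `1 / n` in `ℝ / ℤ`, a point of order `n`. -/
noncomputable def unitFraction (n : ℕ) : UnitAddCircle := ((1 / n : ℝ) : UnitAddCircle)

lemma coe_unitRep (x : UnitAddCircle) : (unitRep x : UnitAddCircle) = x :=
  AddCircle.coe_equivIco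

lemma unitRep_nonneg (x : UnitAddCircle) : 0 ≤ unitRep x := (AddCircle.equivIco 1 0 x).2.1

lemma unitRep_lt_one (x : UnitAddCircle) : unitRep x < 1 :=
  (AddCircle.equivIco (1 : ℝ) 0 x).2.2.trans_eq (zero_add 1)

lemma unitRep_coe (x : ℝ) : unitRep (x : UnitAddCircle) = Int.fract x := by
  simpa only [unitRep, div_one, mul_one] using AddCircle.coe_equivIco_mk_apply (1 : ℝ) x

lemma unitRep_coe_of_mem_Ico {x : ℝ} (hx : x ∈ Set.Ico 0 1) : unitRep (x : UnitAddCircle) = x := by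
  rw [unitRep_coe, Int.fract_eq_self.2 hx]

lemma unitAddCircle_coe_eq_zero_iff {x : ℝ} :
    (x : UnitAddCircle) = 0 ↔ ∃ n : ℤ, (n : ℝ) = x := by
  simp only [AddCircle.coe_eq_zero_iff, zsmul_eq_mul, mul_one]

lemma unitRep_zero : unitRep 0 = 0 := by
  rw [← AddCircle.coe_zero, unitRep_coe, Int.fract_zero]

lemma unitRep_eq_zero_iff {x : UnitAddCircle} : unitRep x = 0 ↔ x = 0 := by
  refine ⟨fun h => ?_, fun h => by rw [h, unitRep_zero]⟩
  rw [← coe_unitRep x, h, AddCircle.coe_zero]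

lemma unitRep_add_unitRep_neg {x : UnitAddCircle} (hx : x ≠ 0) :
    unitRep x + unitRep (-x) = 1 := by
  have hfract : Int.fract (unitRep x) = unitRep x :=
    Int.fract_eq_self.2 ⟨unitRep_nonneg x, unitRep_lt_one x⟩
  have hneg : unitRep (-x) = Int.fract (-unitRep x) := by
    rw [← unitRep_coe, AddCircle.coe_neg, coe_unitRep]
  have hne : Int.fract (unitRep x) ≠ 0 := hfract.symm ▸ mt unitRep_eq_zero_iff.1 hx
  rw [hneg, Int.fract_neg hne, hfract, add_sub_cancel]

lemma one_div_le_unitRep {n : ℕ} {x : UnitAddCircle} (hx : x ≠ 0) (h : n • x = 0) :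
    1 / (n : ℝ) ≤ unitRep x := by
  have hpos : 0 < unitRep x := (unitRep_nonneg x).lt_of_ne' (mt unitRep_eq_zero_iff.1 hx)
  rcases n.eq_zero_or_pos with rfl | hn
  · simpa using hpos.le
  obtain ⟨m, hm⟩ : ∃ m : ℤ, (m : ℝ) = n * unitRep x := by
    rw [← unitAddCircle_coe_eq_zero_iff, ← nsmul_eq_mul, AddCircle.coe_nsmul, coe_unitRep, h]
  have hm_pos : (0 : ℝ) < m := hm ▸ mul_pos (by exact_mod_cast hn) hpos
  have hm_one : (1 : ℝ) ≤ m := by exact_mod_cast hm_pos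
  rwa [div_le_iff₀' (by exact_mod_cast hn), ← hm]

lemma nsmul_unitFraction (u n : ℕ) : u • unitFraction n = ((u / n : ℝ) : UnitAddCircle) := by
  rw [unitFraction, ← AddCircle.coe_nsmul, nsmul_eq_mul, mul_one_div]

lemma unitRep_nsmul_unitFraction {u n : ℕ} (hu : u < n) : unitRep (u • unitFraction n) = u / n := by
  have hn : (0 : ℝ) < n := by exact_mod_cast u.zero_le.trans_lt hu
  rw [nsmul_unitFraction,
    unitRep_coe_of_mem_Ico ⟨by positivity, (div_lt_one hn).2 (by exact_mod_cast hu)⟩]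

lemma nsmul_unitFraction_mul {p : ℕ} (hp : p ≠ 0) (q : ℕ) :
    p • unitFraction (p * q) = unitFraction q := by
  rw [nsmul_unitFraction, unitFraction, Nat.cast_mul, ← div_div, div_self (by exact_mod_cast hp)]

lemma addOrderOf_unitFraction {n : ℕ} (hn : 0 < n) : addOrderOf (unitFraction n) = n :=
  AddCircle.addOrderOf_period_div hn

lemma nsmul_unitFraction_self (n : ℕ) : n • unitFraction n = 0 := by
  rcases n.eq_zero_or_pos with rfl | hn
  · exact zero_nsmul _
  · simpa only [addOrderOf_unitFraction hn] using addOrderOf_nsmul_eq_zero (unitFraction n)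

lemma exists_nsmul_unitFraction_eq {n : ℕ} (hn : 0 < n) {x : UnitAddCircle} (h : n • x = 0) :
    ∃ u : ℕ, u • unitFraction n = x := by
  obtain ⟨u, -, hu⟩ := (AddCircle.nsmul_eq_zero_iff hn).1 h
  exact ⟨u, by rw [nsmul_unitFraction, ← hu, mul_one]⟩

end Circle

section Height

variable {ι : Type*} [Fintype ι]

/-- The sum of the representatives in `[0, 1)` of the coordinates of a point of `(ℝ / ℤ)^ι`. -/
noncomputable def height (g : ι → UnitAddCircle) : ℝ := ∑ i, unitRep (g i)

open Classical in
/-- The set of nonzero coordinates of a point of `(ℝ / ℤ)^ι`. -/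
noncomputable def circleSupport (g : ι → UnitAddCircle) : Finset ι := {i | g i ≠ 0}

lemma mem_circleSupport {g : ι → UnitAddCircle} {i : ι} : i ∈ circleSupport g ↔ g i ≠ 0 := by
  simp only [circleSupport, Finset.mem_filter_univ]

lemma notMem_circleSupport {g : ι → UnitAddCircle} {i : ι} : i ∉ circleSupport g ↔ g i = 0 :=
  mem_circleSupport.not_left

lemma circleSupport_nsmul_subset (n : ℕ) (g : ι → UnitAddCircle) :
    circleSupport (n • g) ⊆ circleSupport g := by
  refine fun i hi => mem_circleSupport.2 fun h => mem_circleSupport.1 hi ?_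
  rw [Pi.smul_apply, h, smul_zero]

lemma height_nonneg (g : ι → UnitAddCircle) : 0 ≤ height g :=
  Finset.sum_nonneg fun _ _ => unitRep_nonneg _

lemma height_zero : height (0 : ι → UnitAddCircle) = 0 :=
  Finset.sum_eq_zero fun _ _ => unitRep_zero

lemma height_add_height_neg (g : ι → UnitAddCircle) :
    height g + height (-g) = (circleSupport g).card := by
  classical
  rw [height, height, ← Finset.sum_add_distrib, circleSupport, ← Finset.sum_boole]
  refine Finset.sum_congr rfl fun i _ => ?_
  split_ifs with hi
  · exact unitRep_add_unitRep_neg hi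
  · rw [Pi.neg_apply, not_not.1 hi, neg_zero, unitRep_zero, add_zero]

end Height

section TwoValued

variable {ι : Type*} [DecidableEq ι]

/-- The point of `(ℝ / ℤ)^ι` whose coordinates are `a` on `A` and `b` off `A`. -/
def twoValued (A : Finset ι) (a b : UnitAddCircle) : ι → UnitAddCircle :=
  fun i => if i ∈ A then a else b

lemma nsmul_twoValued (u : ℕ) (A : Finset ι) (a b : UnitAddCircle) :
    u • twoValued A a b = twoValued A (u • a) (u • b) :=
  funext fun i => smul_ite (i ∈ A) a b u

variable [Fintype ι]

lemma twoValued_univ (a b : UnitAddCircle) : twoValued (Finset.univ : Finset ι) a b = fun _ => a :=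
  funext fun i => if_pos (Finset.mem_univ i)

lemma sum_ite_mem_const (A : Finset ι) (a b : ℝ) :
    ∑ i, (if i ∈ A then a else b) = A.card * a + Aᶜ.card * b := by
  simp only [Finset.sum_ite, Finset.sum_const, nsmul_eq_mul, Finset.filter_univ_mem,
    Finset.filter_notMem_eq_sdiff, Finset.compl_eq_univ_sdiff]

lemma height_twoValued (A : Finset ι) (a b : UnitAddCircle) :
    height (twoValued A a b) = A.card * unitRep a + Aᶜ.card * unitRep b := by
  simp only [height, twoValued, apply_ite unitRep, sum_ite_mem_const]

lemma eq_twoValued_of_height_le {g : ι → UnitAddCircle} {A : Finset ι} {a b : ℝ}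
    (hA : ∀ i ∈ A, a ≤ unitRep (g i)) (hAc : ∀ i ∉ A, b ≤ unitRep (g i))
    (h : height g ≤ A.card * a + Aᶜ.card * b) : g = twoValued A a b := by
  have hle : ∀ i ∈ Finset.univ, (if i ∈ A then a else b) ≤ unitRep (g i) := fun i _ => by
    split_ifs with hi
    exacts [hA i hi, hAc i hi]
  have heq := (Finset.sum_eq_sum_iff_of_le hle).1
    ((Finset.sum_le_sum hle).antisymm (sum_ite_mem_const A a b ▸ h))
  funext i
  rw [← coe_unitRep (g i), ← heq i (Finset.mem_univ i), twoValued]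
  split_ifs <;> rfl

end TwoValued

lemma isAddCyclic_of_squarefree_card {G : Type*} [AddCommGroup G]
    (h : Squarefree (Nat.card G)) : IsAddCyclic G := by
  have : IsZGroup (Multiplicative G) := .of_squarefree h
  have : Finite G := Nat.finite_of_card_ne_zero h.ne_zero
  exact isCyclic_multiplicative_iff.1 inferInstance

lemma exists_mem_card_le_apply_add_one {α : Type*} [AddGroup α] {N : ℕ} (e : α ≃ Fin N)
    (K : AddSubgroup α) : ∃ x ∈ K, Nat.card K ≤ e x + 1 := by
  by_contra! h
  have : Finite α := .of_equiv _ e.symm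
  have hcard : Nat.card K ≤ Nat.card (Fin (Nat.card K - 1)) :=
    Nat.card_le_card_of_injective
      (fun x : K => (⟨e x, Nat.lt_sub_of_add_lt (h x x.2)⟩ : Fin (Nat.card K - 1)))
      fun x y hxy => Subtype.ext (e.injective (Fin.ext (Fin.mk.inj hxy)))
  rw [Nat.card_fin] at hcard
  exact (Nat.sub_lt Nat.card_pos one_pos).not_ge hcard

lemma exists_val_apply_eq {α : Type*} {N m : ℕ} (e : α ≃ Fin N) (hm : m < N) :
    ∃ a, (e a : ℕ) = m :=
  ⟨e.symm ⟨m, hm⟩, by rw [e.apply_symm_apply]⟩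

lemma addOrderOf_mul_index_zmultiples {α : Type*} [AddGroup α] {N : ℕ} (e : α ≃ Fin N) (h : α) :
    addOrderOf h * (AddSubgroup.zmultiples h).index = N := by
  rw [← Nat.card_zmultiples, AddSubgroup.card_mul_index, Nat.card_congr e, Nat.card_fin]

lemma addOrderOf_pos_of_equiv_fin {α : Type*} [AddGroup α] {N : ℕ} (e : α ≃ Fin N) (h : α) :
    0 < addOrderOf h :=
  have := Finite.of_equiv _ e.symm
  addOrderOf_pos h

lemma one_lt_addOrderOf_of_equiv_fin {α : Type*} [AddGroup α] {N : ℕ} (e : α ≃ Fin N) {h : α}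
    (hh : h ≠ 0) : 1 < addOrderOf h :=
  lt_of_le_of_ne' (addOrderOf_pos_of_equiv_fin e h) (mt AddMonoid.addOrderOf_eq_one_iff.1 hh)

section Coordinates

variable {ι : Type*} {G : AddSubgroup (ι → UnitAddCircle)} {g h : G} {i : ι}

lemma addOrderOf_nsmul_apply (g : G) (i : ι) :
    addOrderOf g • g.1 i = 0 :=
  congrFun (congrArg Subtype.val (addOrderOf_nsmul_eq_zero g)) i

lemma zmultiples_le_ker_eval (hg : g.1 i = 0) :
    AddSubgroup.zmultiples g ≤ ((Pi.evalAddMonoidHom _ i).comp G.subtype).ker :=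
  AddSubgroup.zmultiples_le.2 hg

lemma ker_eval_ne_top (hfull : ∃ g ∈ G, g i ≠ 0) :
    ((Pi.evalAddMonoidHom _ i).comp G.subtype).ker ≠ ⊤ := by
  obtain ⟨x, hx, hxi⟩ := hfull
  exact fun htop => hxi (htop.ge (AddSubgroup.mem_top ⟨x, hx⟩))

lemma index_nsmul_apply_eq_zero (hh : h.1 i = 0) (g : G) :
    (AddSubgroup.zmultiples h).index • g.1 i = 0 :=
  zmultiples_le_ker_eval hh (AddSubgroup.nsmul_index_mem _ g)

lemma apply_ne_zero_of_notMem_zmultiples (hfull : ∃ g ∈ G, g i ≠ 0)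
    (hprime : (AddSubgroup.zmultiples h).index.Prime)
    (hh : h.1 i = 0) (hg : g ∉ AddSubgroup.zmultiples h) :
    g.1 i ≠ 0 := by
  intro hgi
  have hindex := AddSubgroup.relIndex_mul_index (zmultiples_le_ker_eval hh)
  rcases (Nat.dvd_prime hprime).1 (Dvd.intro_left _ hindex) with hker | hker
  · exact ker_eval_ne_top hfull (AddSubgroup.index_eq_one.1 hker)
  · rw [hker, Nat.mul_eq_right hprime.ne_zero, AddSubgroup.relIndex_eq_one] at hindex
    exact hg (hindex hgi)

variable [Fintype ι]

lemma one_div_addOrderOf_le (g : G) (hi : i ∈ circleSupport g.1) :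
    1 / (addOrderOf g : ℝ) ≤ unitRep (g.1 i) :=
  one_div_le_unitRep (mem_circleSupport.1 hi) (addOrderOf_nsmul_apply g i)

lemma circleSupport_eq_univ (hfull : ∀ i, ∃ g ∈ G, g i ≠ 0)
    (hg : AddSubgroup.zmultiples g = ⊤) :
    circleSupport g.1 = Finset.univ :=
  Finset.eq_univ_of_forall fun i => mem_circleSupport.2 fun hi =>
    ker_eval_ne_top (hfull i) (top_le_iff.1 (hg ▸ zmultiples_le_ker_eval hi))

lemma one_div_le_of_notMem_circleSupport {q : ℕ} (hfull : ∀ i, ∃ g ∈ G, g i ≠ 0) (hq : q.Prime)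
    (hindex : (AddSubgroup.zmultiples h).index = q) (hg : g ∉ AddSubgroup.zmultiples h) {i : ι}
    (hi : i ∉ circleSupport h.1) : 1 / (q : ℝ) ≤ unitRep (g.1 i) := by
  subst hindex
  have hhi := notMem_circleSupport.1 hi
  exact one_div_le_unitRep (apply_ne_zero_of_notMem_zmultiples (hfull i) hq hhi hg)
    (index_nsmul_apply_eq_zero hhi g)

end Coordinates

section HeightIndex

variable {ι : Type*} [Fintype ι] {G : AddSubgroup (ι → UnitAddCircle)} {c N : ℕ}

/-- `e` numbers the elements of the finite subgroup `G` of `(ℝ / ℤ)^ι` by their heights, which are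
`0, c, 2c, …, (N - 1)c`, each attained once. -/
structure IsHeightIndex (c : ℕ) (e : G ≃ Fin N) : Prop where
  step_pos : 0 < c
  height_eq : ∀ g : G, height g.1 = c * (e g : ℕ)

namespace IsHeightIndex

variable {e : G ≃ Fin N} {g h : G}

lemma mul_apply_add_apply_neg (he : IsHeightIndex c e) (g : G) :
    c * (e g + e (-g) : ℕ) = (circleSupport g.1).card := by
  have h := height_add_height_neg g.1
  rw [← AddSubgroup.coe_neg, he.height_eq, he.height_eq, ← mul_add] at h
  exact_mod_cast h

lemma apply_eq_zero_iff (he : IsHeightIndex c e) : (e g : ℕ) = 0 ↔ g = 0 := by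
  have hzero : (e 0 : ℕ) = 0 := by
    have h := he.height_eq 0
    rw [AddSubgroup.coe_zero, height_zero, zero_eq_mul] at h
    exact_mod_cast h.resolve_left (by exact_mod_cast he.step_pos.ne')
  rw [← hzero, Fin.val_inj, e.apply_eq_iff_eq]

lemma apply_pos_iff (he : IsHeightIndex c e) : 0 < (e g : ℕ) ↔ g ≠ 0 :=
  Nat.pos_iff_ne_zero.trans he.apply_eq_zero_iff.not

lemma ne_zero_of_apply_eq_one (he : IsHeightIndex c e) (hh : (e h : ℕ) = 1) : h ≠ 0 :=
  he.apply_pos_iff.1 (hh ▸ one_pos)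

-- Each nonzero coordinate of `h` is at least `1 / n`, where `n` is the order of `h`; conversely a
-- multiple of `h` of index at least `n - 1` and its negative have total height at least `n * c`.
lemma card_circleSupport_of_apply_eq_one (he : IsHeightIndex c e) (hh : (e h : ℕ) = 1) :
    (circleSupport h.1).card = addOrderOf h * c := by
  have horder := one_lt_addOrderOf_of_equiv_fin e (he.ne_zero_of_apply_eq_one hh)
  apply le_antisymm
  · have hle : (circleSupport h.1).card * (1 / (addOrderOf h : ℝ)) ≤ c := by
      calc _ ≤ ∑ i ∈ circleSupport h.1, unitRep (h.1 i) := by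
            rw [← nsmul_eq_mul]
            exact Finset.card_nsmul_le_sum _ _ _ fun i hi => one_div_addOrderOf_le h hi
        _ ≤ height h.1 :=
            Finset.sum_le_univ_sum_of_nonneg fun i => unitRep_nonneg _
        _ = c := by rw [he.height_eq, hh, Nat.cast_one, mul_one]
    rw [mul_one_div, div_le_iff₀' (by exact_mod_cast one_pos.trans horder)] at hle
    exact_mod_cast hle
  · obtain ⟨x, hx, hcard⟩ := exists_mem_card_le_apply_add_one e (AddSubgroup.zmultiples h)
    have := Finite.of_equiv _ e.symm
    obtain ⟨u, rfl⟩ := mem_multiples_iff_mem_zmultiples.2 hx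
    simp only [Nat.card_zmultiples] at hcard
    have hne : u • h ≠ 0 := he.apply_pos_iff.1 (by omega)
    have hneg : 0 < (e (-(u • h)) : ℕ) := he.apply_pos_iff.2 (neg_ne_zero.2 hne)
    calc addOrderOf h * c ≤ c * (e (u • h) + e (-(u • h)) : ℕ) := by
          rw [mul_comm]; exact Nat.mul_le_mul_left c (by omega)
      _ = (circleSupport ((u • h : G) : ι → UnitAddCircle)).card := he.mul_apply_add_apply_neg _
      _ ≤ _ := Finset.card_le_card (circleSupport_nsmul_subset u _)

lemma eq_twoValued_of_apply_eq_one [DecidableEq ι] (he : IsHeightIndex c e) (hh : (e h : ℕ) = 1) :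
    h.1 = twoValued (circleSupport h.1)
      (unitFraction (addOrderOf h)) 0 := by
  refine eq_twoValued_of_height_le (a := 1 / (addOrderOf h : ℝ)) (b := 0)
    (fun i hi => one_div_addOrderOf_le h hi) (fun i _ => unitRep_nonneg _) ?_
  have hne : (addOrderOf h : ℝ) ≠ 0 := by exact_mod_cast (addOrderOf_pos_of_equiv_fin e h).ne'
  rw [he.height_eq, hh, he.card_circleSupport_of_apply_eq_one hh]
  apply le_of_eq
  push_cast
  field_simp
  ring

lemma apply_nsmul (he : IsHeightIndex c e) (hh : (e h : ℕ) = 1) {u : ℕ} (hu : u < addOrderOf h) :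
    (e (u • h) : ℕ) = u := by
  classical
  have hheight : height ((u • h : G) : ι → UnitAddCircle) = c * u := by
    have hn : (addOrderOf h : ℝ) ≠ 0 := by exact_mod_cast (addOrderOf_pos_of_equiv_fin e h).ne'
    rw [AddSubgroup.coe_nsmul, he.eq_twoValued_of_apply_eq_one hh, nsmul_twoValued,
      height_twoValued, smul_zero, unitRep_zero, unitRep_nsmul_unitFraction hu,
      he.card_circleSupport_of_apply_eq_one hh]
    push_cast
    field_simp
    ring
  rw [he.height_eq, mul_right_inj' (by exact_mod_cast he.step_pos.ne')] at hheight
  exact_mod_cast hheight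

lemma mem_zmultiples_iff (he : IsHeightIndex c e) (hh : (e h : ℕ) = 1) :
    g ∈ AddSubgroup.zmultiples h ↔ (e g : ℕ) < addOrderOf h := by
  classical
  have := Finite.of_equiv _ e.symm
  rw [mem_zmultiples_iff_mem_range_addOrderOf, Finset.mem_image]
  constructor
  · rintro ⟨u, hu, rfl⟩
    rw [Finset.mem_range] at hu
    rwa [he.apply_nsmul hh hu]
  · intro hg
    exact ⟨e g, Finset.mem_range.2 hg, e.injective (Fin.ext (he.apply_nsmul hh hg))⟩

lemma card_eq_and_const_mem (he : IsHeightIndex c e) (hfull : ∀ i, ∃ g ∈ G, g i ≠ 0)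
    (hh : (e h : ℕ) = 1) (horder : addOrderOf h = N) :
    Fintype.card ι = N * c ∧ (fun _ => unitFraction N) ∈ G := by
  classical
  have htop : AddSubgroup.zmultiples h = ⊤ := by
    have := Finite.of_equiv _ e.symm
    apply AddSubgroup.eq_top_of_card_eq
    rw [Nat.card_zmultiples, horder, Nat.card_congr e, Nat.card_fin]
  have hsupp := circleSupport_eq_univ hfull htop
  constructor
  · rw [← Finset.card_univ, ← hsupp, he.card_circleSupport_of_apply_eq_one hh, horder]
  · rw [← twoValued_univ (unitFraction N) 0, ← hsupp, ← horder,
      ← he.eq_twoValued_of_apply_eq_one hh]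
    exact h.2

lemma dvd_card_of_isAddCyclic [IsAddCyclic G] (he : IsHeightIndex c e)
    (hfull : ∀ i, ∃ g ∈ G, g i ≠ 0) : c ∣ Fintype.card ι := by
  obtain ⟨w, hw⟩ := isAddCyclic_iff_exists_zmultiples_eq_top.1 ‹IsAddCyclic G›
  rw [← Finset.card_univ, ← circleSupport_eq_univ hfull hw, ← he.mul_apply_add_apply_neg]
  exact dvd_mul_right c _

lemma notMem_zmultiples_iff (he : IsHeightIndex c e) (hh : (e h : ℕ) = 1) :
    g ∉ AddSubgroup.zmultiples h ↔ addOrderOf h ≤ (e g : ℕ) :=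
  (he.mem_zmultiples_iff hh).not.trans not_lt

section PrimeIndex

variable {n q : ℕ}

lemma card_compl_circleSupport_le [DecidableEq ι] (he : IsHeightIndex c e)
    (hfull : ∀ i, ∃ g ∈ G, g i ≠ 0) (hh : (e h : ℕ) = 1) (horder : addOrderOf h = n)
    (hq : q.Prime) (hindex : (AddSubgroup.zmultiples h).index = q) :
    (circleSupport h.1)ᶜ.card ≤ n * q * c := by
  have hN : n * q = N := horder ▸ hindex ▸ addOrderOf_mul_index_zmultiples e h
  have hn : 0 < n := horder ▸ addOrderOf_pos_of_equiv_fin e h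
  obtain ⟨x, hx⟩ := exists_val_apply_eq e ((lt_mul_of_one_lt_right hn hq.one_lt).trans_eq hN)
  have hxh : x ∉ AddSubgroup.zmultiples h :=
    (he.notMem_zmultiples_iff hh).2 (horder.trans hx.symm).le
  have hle : (circleSupport h.1)ᶜ.card * (1 / (q : ℝ)) ≤ c * n := by
    calc _ ≤ ∑ i ∈ (circleSupport h.1)ᶜ, unitRep (x.1 i) := by
          rw [← nsmul_eq_mul]
          exact Finset.card_nsmul_le_sum _ _ _ fun i hi =>
            one_div_le_of_notMem_circleSupport hfull hq hindex hxh (Finset.mem_compl.1 hi)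
      _ ≤ height x.1 := Finset.sum_le_univ_sum_of_nonneg fun i => unitRep_nonneg _
      _ = c * n := by rw [he.height_eq, hx]
  rw [mul_one_div, div_le_iff₀ (by exact_mod_cast hq.pos)] at hle
  rw [mul_comm, ← mul_assoc]
  exact_mod_cast hle

lemma mul_le_card (he : IsHeightIndex c e) (hh : (e h : ℕ) = 1) (horder : addOrderOf h = n)
    (hn : n < N) : c * (N - 1 + n) ≤ Fintype.card ι := by
  subst horder
  obtain ⟨y, hy⟩ := exists_val_apply_eq e (Nat.sub_one_lt_of_lt hn)
  have hyh : y ∉ AddSubgroup.zmultiples h := (he.notMem_zmultiples_iff hh).2 (by omega)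
  have hneg : addOrderOf h ≤ (e (-y) : ℕ) :=
    (he.notMem_zmultiples_iff hh).1 (neg_mem_iff.not.2 hyh)
  calc c * (N - 1 + addOrderOf h) ≤ c * (e y + e (-y) : ℕ) :=
        Nat.mul_le_mul_left c (by omega)
    _ = (circleSupport y.1).card := he.mul_apply_add_apply_neg y
    _ ≤ Fintype.card ι := Finset.card_le_univ _

-- The element of height `(N - 1) * c` has full support, and its negative has height `n * c`.
lemma exists_full_circleSupport (he : IsHeightIndex c e) (hh : (e h : ℕ) = 1)
    (horder : addOrderOf h = n) (hn : n < N) (hcard : Fintype.card ι = c * (N - 1 + n)) :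
    ∃ x : G, (e x : ℕ) = n ∧ circleSupport x.1 = Finset.univ := by
  subst horder
  obtain ⟨y, hy⟩ := exists_val_apply_eq e (Nat.sub_one_lt_of_lt hn)
  have hyh : -y ∉ AddSubgroup.zmultiples h :=
    neg_mem_iff.not.2 ((he.notMem_zmultiples_iff hh).2 (by omega))
  have hneg : addOrderOf h ≤ (e (-y) : ℕ) := (he.notMem_zmultiples_iff hh).1 hyh
  have hsupp := he.mul_apply_add_apply_neg (-y)
  rw [neg_neg, hy] at hsupp
  have hle : c * (e (-y) + (N - 1)) ≤ c * (addOrderOf h + (N - 1)) := by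
    rw [hsupp, add_comm (addOrderOf h), ← hcard]
    exact Finset.card_le_univ _
  have heq : (e (-y) : ℕ) = addOrderOf h :=
    (Nat.le_of_add_le_add_right (Nat.le_of_mul_le_mul_left hle he.step_pos)).antisymm hneg
  refine ⟨-y, heq, (Finset.card_eq_iff_eq_univ _).1 ?_⟩
  rw [← hsupp, heq, hcard, add_comm]

lemma card_eq_or [IsAddCyclic G] (he : IsHeightIndex c e) (hfull : ∀ i, ∃ g ∈ G, g i ≠ 0)
    (hh : (e h : ℕ) = 1) (horder : addOrderOf h = n) (hq : q.Prime)
    (hindex : (AddSubgroup.zmultiples h).index = q) :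
    Fintype.card ι = c * (n * q + n) ∨ Fintype.card ι = c * (n * q - 1 + n) := by
  classical
  have hN : n * q = N := horder ▸ hindex ▸ addOrderOf_mul_index_zmultiples e h
  have hn : 0 < n := horder ▸ addOrderOf_pos_of_equiv_fin e h
  have hlt : n < n * q := lt_mul_of_one_lt_right hn hq.one_lt
  have hlower := he.mul_le_card hh horder (hN ▸ hlt)
  have hupper : Fintype.card ι ≤ c * (n * q + n) := by
    rw [← Finset.card_add_card_compl (circleSupport h.1),
      he.card_circleSupport_of_apply_eq_one hh, horder]
    linarith [he.card_compl_circleSupport_le hfull hh horder hq hindex]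
  obtain ⟨m, hm⟩ := he.dvd_card_of_isAddCyclic hfull
  rw [hm] at hlower hupper ⊢
  have hlower' := Nat.le_of_mul_le_mul_left hlower he.step_pos
  have hupper' := Nat.le_of_mul_le_mul_left hupper he.step_pos
  rw [Nat.mul_right_inj he.step_pos.ne', Nat.mul_right_inj he.step_pos.ne']
  omega

variable [DecidableEq ι]

lemma twoValued_zero_unitFraction_mem (he : IsHeightIndex c e) (hfull : ∀ i, ∃ g ∈ G, g i ≠ 0)
    (hh : (e h : ℕ) = 1) (horder : addOrderOf h = n) (hq : q.Prime)
    (hindex : (AddSubgroup.zmultiples h).index = q) (hcard : Fintype.card ι = c * (n * q + n)) :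
    twoValued (circleSupport h.1) 0 (unitFraction q) ∈ G := by
  have hN : n * q = N := horder ▸ hindex ▸ addOrderOf_mul_index_zmultiples e h
  have hn : 0 < n := horder ▸ addOrderOf_pos_of_equiv_fin e h
  obtain ⟨x, hx⟩ := exists_val_apply_eq e ((lt_mul_of_one_lt_right hn hq.one_lt).trans_eq hN)
  have hxh : x ∉ AddSubgroup.zmultiples h :=
    (he.notMem_zmultiples_iff hh).2 (horder.trans hx.symm).le
  have hcompl : (circleSupport h.1)ᶜ.card = c * (n * q) := by
    rw [Finset.card_compl, hcard, he.card_circleSupport_of_apply_eq_one hh, horder, mul_comm n c,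
      mul_add, Nat.add_sub_cancel]
  have hq_ne : (q : ℝ) ≠ 0 := by exact_mod_cast hq.ne_zero
  have heq := eq_twoValued_of_height_le (g := x.1) (A := circleSupport h.1) (a := 0)
    (b := 1 / (q : ℝ)) (fun i _ => unitRep_nonneg _)
    (fun i hi => one_div_le_of_notMem_circleSupport hfull hq hindex hxh hi) (by
      rw [he.height_eq, hx, hcompl]
      apply le_of_eq
      push_cast
      field_simp
      ring)
  exact heq ▸ x.2

lemma twoValued_unitFraction_mem (he : IsHeightIndex c e) (hfull : ∀ i, ∃ g ∈ G, g i ≠ 0)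
    (hh : (e h : ℕ) = 1) (horder : addOrderOf h = n) (hq : q.Prime)
    (hindex : (AddSubgroup.zmultiples h).index = q)
    (hcard : Fintype.card ι = c * (n * q - 1 + n)) :
    twoValued (circleSupport h.1) (unitFraction (n * q)) (unitFraction q) ∈ G := by
  have hN : n * q = N := horder ▸ hindex ▸ addOrderOf_mul_index_zmultiples e h
  have hn : 0 < n := horder ▸ addOrderOf_pos_of_equiv_fin e h
  obtain ⟨x, hx, hsupp⟩ := he.exists_full_circleSupport hh horder
    ((lt_mul_of_one_lt_right hn hq.one_lt).trans_eq hN) (hN ▸ hcard)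
  have hxh : x ∉ AddSubgroup.zmultiples h :=
    (he.notMem_zmultiples_iff hh).2 (horder.trans hx.symm).le
  have hcompl : (circleSupport h.1)ᶜ.card = c * (n * q - 1) := by
    rw [Finset.card_compl, hcard, he.card_circleSupport_of_apply_eq_one hh, horder, mul_comm n c,
      mul_add, Nat.add_sub_cancel]
  have htorsion : ∀ i, (n * q) • x.1 i = 0 := fun i => by
    have := Finite.of_equiv _ e.symm
    rw [hN, ← Nat.card_fin N, ← Nat.card_congr e]
    exact congrFun (congrArg Subtype.val (card_nsmul_eq_zero' (x := x))) i
  have hq_ne : (q : ℝ) ≠ 0 := by exact_mod_cast hq.ne_zero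
  have hn_ne : (n : ℝ) ≠ 0 := by exact_mod_cast hn.ne'
  have heq := eq_twoValued_of_height_le (g := x.1) (A := circleSupport h.1)
    (a := 1 / ((n * q : ℕ) : ℝ)) (b := 1 / (q : ℝ))
    (fun i _ => one_div_le_unitRep (mem_circleSupport.1 (hsupp ▸ Finset.mem_univ i)) (htorsion i))
    (fun i hi => one_div_le_of_notMem_circleSupport hfull hq hindex hxh hi) (by
      rw [he.height_eq, hx, hcompl, he.card_circleSupport_of_apply_eq_one hh, horder,
        Nat.cast_mul c, Nat.cast_sub (Nat.mul_pos hn hq.pos)]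
      apply le_of_eq
      push_cast
      field_simp
      ring)
  exact heq ▸ x.2

end PrimeIndex

end IsHeightIndex

/-- The two shapes `G` can have if it contains an element of height `c` and order `n` that generates
a subgroup of prime index `q`: in both of them `G` is generated by points that are constant on a set
`A` of `n * c` coordinates and on its complement. -/
def HasTwoValuedGenerators [DecidableEq ι] (G : AddSubgroup (ι → UnitAddCircle)) (c n q : ℕ) :
    Prop :=
  ∃ A : Finset ι, A.card = n * c ∧
    ((Fintype.card ι = c * (n * q + n) ∧ twoValued A (unitFraction n) 0 ∈ G ∧
        twoValued A 0 (unitFraction q) ∈ G) ∨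
      (Fintype.card ι = c * (n * q - 1 + n) ∧
        twoValued A (unitFraction (n * q)) (unitFraction q) ∈ G))

variable [DecidableEq ι] {e : G ≃ Fin N} {h : G}

lemma IsHeightIndex.hasTwoValuedGenerators [IsAddCyclic G] (he : IsHeightIndex c e)
    (hfull : ∀ i, ∃ g ∈ G, g i ≠ 0) (hh : (e h : ℕ) = 1) {q : ℕ} (hq : q.Prime)
    (hindex : (AddSubgroup.zmultiples h).index = q) :
    HasTwoValuedGenerators G c (addOrderOf h) q := by
  refine ⟨circleSupport h.1, he.card_circleSupport_of_apply_eq_one hh, ?_⟩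
  rcases he.card_eq_or hfull hh rfl hq hindex with hcard | hcard
  · exact .inl ⟨hcard, he.eq_twoValued_of_apply_eq_one hh ▸ h.2,
      he.twoValued_zero_unitFraction_mem hfull hh rfl hq hindex hcard⟩
  · exact .inr ⟨hcard, he.twoValued_unitFraction_mem hfull hh rfl hq hindex hcard⟩

theorem IsHeightIndex.classification {p q : ℕ} (hp : p.Prime) (hq : q.Prime) (hpq : p ≠ q)
    {e : G ≃ Fin (p * q)} (he : IsHeightIndex c e) (hfull : ∀ i, ∃ g ∈ G, g i ≠ 0) :
    (Fintype.card ι = p * q * c ∧ (fun _ => unitFraction (p * q)) ∈ G) ∨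
      HasTwoValuedGenerators G c p q ∨ HasTwoValuedGenerators G c q p := by
  have hcoprime : p.Coprime q := (Nat.coprime_primes hp hq).2 hpq
  have : IsAddCyclic G := isAddCyclic_of_squarefree_card <| by
    rw [Nat.card_congr e, Nat.card_fin]
    exact (Nat.squarefree_mul hcoprime).2 ⟨hp.squarefree, hq.squarefree⟩
  obtain ⟨h, hh⟩ := exists_val_apply_eq e (one_lt_mul'' hp.one_lt hq.one_lt)
  have hmul := addOrderOf_mul_index_zmultiples e h
  obtain ⟨a, b, ha, hb, horder⟩ := Nat.dvd_mul.1 (Dvd.intro _ hmul)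
  rcases (Nat.dvd_prime hp).1 ha with rfl | rfl <;> rcases (Nat.dvd_prime hq).1 hb with rfl | rfl
  · exact absurd horder.symm (one_lt_addOrderOf_of_equiv_fin e (he.ne_zero_of_apply_eq_one hh)).ne'
  · rw [← horder, one_mul, mul_comm p, Nat.mul_right_inj hq.ne_zero] at hmul
    have hshape := he.hasTwoValuedGenerators hfull hh hp hmul
    rw [← horder, one_mul] at hshape
    exact .inr (.inr hshape)
  · rw [← horder, mul_one, Nat.mul_right_inj hp.ne_zero] at hmul
    have hshape := he.hasTwoValuedGenerators hfull hh hq hmul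
    rw [← horder, mul_one] at hshape
    exact .inr (.inl hshape)
  · exact .inl (he.card_eq_and_const_mem hfull hh horder.symm)

end HeightIndex

section TorusKernel

variable {m n : Type*} [Fintype m]

/-- The points `g` of `(ℝ / ℤ)^m` with `g ᵥ* M = 0`. -/
def torusKernel (M : Matrix m n ℤ) : AddSubgroup (m → UnitAddCircle) where
  carrier := {g | ∀ k, ∑ i, M i k • g i = 0}
  zero_mem' k := by simp only [Pi.zero_apply, smul_zero, Finset.sum_const_zero]
  add_mem' hg hh k := by
    simp only [Pi.add_apply, smul_add, Finset.sum_add_distrib, hg k, hh k, add_zero]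
  neg_mem' hg k := by simp only [Pi.neg_apply, smul_neg, Finset.sum_neg_distrib, hg k, neg_zero]

lemma mem_torusKernel {M : Matrix m n ℤ} {g : m → UnitAddCircle} :
    g ∈ torusKernel M ↔ ∀ k, ∑ i, M i k • g i = 0 :=
  Iff.rfl

/-- The inclusion of `ℚ / ℤ` in `ℝ / ℤ`. -/
noncomputable def ratCircleInclusion : AddCircle (1 : ℚ) →+ UnitAddCircle :=
  QuotientAddGroup.map _ _ (Rat.castHom ℝ).toAddMonoidHom <| by
    rintro _ ⟨k, rfl⟩
    exact ⟨k, by simp⟩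

lemma ratCircleInclusion_injective : Function.Injective ratCircleInclusion := by
  rw [injective_iff_map_eq_zero]
  intro x hx
  obtain ⟨r, rfl⟩ := QuotientAddGroup.mk_surjective x
  obtain ⟨k, hk⟩ := unitAddCircle_coe_eq_zero_iff.1 hx
  have hk : (k : ℝ) = (r : ℝ) := hk
  have hkr : (k : ℚ) = r := by exact_mod_cast hk
  exact (AddCircle.coe_eq_zero_iff _).2 ⟨k, by rw [zsmul_one, hkr]⟩

lemma exists_addMonoidHom_unitAddCircle_ne_zero {M : Type*} [AddCommGroup M] {x : M}
    (hx : x ≠ 0) : ∃ χ : M →+ UnitAddCircle, χ x ≠ 0 := by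
  obtain ⟨χ, hχ⟩ := CharacterModule.exists_character_apply_ne_zero_of_ne_zero hx
  exact ⟨ratCircleInclusion.comp χ, fun h => hχ (ratCircleInclusion_injective
    (h.trans (map_zero _).symm))⟩

-- If a column `v` of the second matrix were not an integer combination of the columns of the first,
-- a character of `ℤ^m` trivial on the columns of the first but not on `v` would be a point of the
-- first kernel outside the second.
lemma exists_mul_eq_of_torusKernel_le [Fintype n] {n' : Type*} {M : Matrix m n ℤ}
    {M' : Matrix m n' ℤ} (h : torusKernel M ≤ torusKernel M') :
    ∃ W : Matrix n n' ℤ, M * W = M' := by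
  classical
  set L := LinearMap.range M.mulVecLin
  have hcol : ∀ k, M'.col k ∈ L := by
    intro k
    by_contra hk
    obtain ⟨χ, hχ⟩ := exists_addMonoidHom_unitAddCircle_ne_zero
      (mt (Submodule.Quotient.mk_eq_zero L).1 hk)
    set g : m → UnitAddCircle := fun i => χ (L.mkQ (Pi.single i 1)) with hg
    have hχ_apply : ∀ v : m → ℤ, χ (L.mkQ v) = ∑ i, v i • g i := fun v => by
      conv_lhs => rw [← Finset.univ_sum_single v]
      rw [map_sum, map_sum]
      refine Finset.sum_congr rfl fun i _ => ?_
      rw [hg, ← map_zsmul χ, ← map_zsmul L.mkQ, ← Pi.single_smul, smul_eq_mul, mul_one]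
    have hgM : g ∈ torusKernel M := fun l => by
      have hl : M.col l ∈ L := ⟨Pi.single l 1, M.mulVec_single_one l⟩
      rw [← map_zero χ, ← (Submodule.Quotient.mk_eq_zero L).2 hl]
      exact (hχ_apply _).symm
    exact hχ ((hχ_apply _).trans (h hgM k))
  choose w hw using hcol
  exact ⟨fun l k => w k l, Matrix.ext fun i k => congrFun (hw k) i⟩

lemma exists_mul_eq_of_torusKernel_eq [DecidableEq m] {M M' : Matrix m m ℤ} (hM : M.det ≠ 0)
    (h : torusKernel M = torusKernel M') :
    ∃ W : Matrix m m ℤ, IsUnit W.det ∧ M * W = M' := by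
  obtain ⟨W, hW⟩ := exists_mul_eq_of_torusKernel_le h.le
  obtain ⟨W', hW'⟩ := exists_mul_eq_of_torusKernel_le h.ge
  refine ⟨W, IsUnit.of_mul_eq_one W'.det (mul_left_cancel₀ hM ?_), hW⟩
  rw [← mul_assoc, ← Matrix.det_mul, ← Matrix.det_mul, hW, hW', mul_one]

lemma det_smul_apply_of_mem_torusKernel [DecidableEq m] {M : Matrix m m ℤ} {g : m → UnitAddCircle}
    (hg : g ∈ torusKernel M) (j : m) : M.det • g j = 0 := by
  calc M.det • g j = ∑ i, (M * M.adjugate) i j • g i := by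
        simp [Matrix.mul_adjugate, Matrix.smul_apply, Matrix.one_apply, ite_smul]
    _ = ∑ k, M.adjugate k j • ∑ i, M i k • g i := by
        simp_rw [Matrix.mul_apply, Finset.sum_smul, Finset.smul_sum, smul_smul, mul_comm]
        exact Finset.sum_comm
    _ = 0 := by simp_rw [hg _, smul_zero, Finset.sum_const_zero]

lemma finite_torusKernel [DecidableEq m] {M : Matrix m m ℤ} (hM : M.det ≠ 0) :
    Finite (torusKernel M) := by
  refine Set.Finite.subset (Set.Finite.pi' fun _ : m =>
    AddCircle.finite_torsion (p := 1) (Int.natAbs_pos.2 hM)) fun g hg j => ?_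
  exact natAbs_nsmul_eq_zero.2 (det_smul_apply_of_mem_torusKernel hg j)

lemma coe_sum_unitAddCircle {ι : Type*} (s : Finset ι) (y : ι → ℝ) :
    ((∑ i ∈ s, y i : ℝ) : UnitAddCircle) = ∑ i ∈ s, (y i : UnitAddCircle) :=
  map_sum (QuotientAddGroup.mk' (AddSubgroup.zmultiples (1 : ℝ))) y s

lemma coe_mem_torusKernel {M : Matrix m n ℤ} {y : m → ℝ} :
    (fun i => (y i : UnitAddCircle)) ∈ torusKernel M ↔
      ∀ k, ∃ z : ℤ, (z : ℝ) = ∑ i, y i * M i k := by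
  refine forall_congr' fun k => ?_
  rw [← unitAddCircle_coe_eq_zero_iff, coe_sum_unitAddCircle]
  simp_rw [mul_comm (y _), ← zsmul_eq_mul, AddCircle.coe_zsmul]

end TorusKernel

section LatticeSimplex

variable {d : ℕ}

/-- A family of lattice points, viewed in `ℝ^d`. -/
def realPoints {ι : Type*} (V : ι → Fin d → ℤ) : ι → Fin d → ℝ :=
  fun i j => V i j

/-- The lattice polytope spanned by a family of lattice points. -/
def latticeSimplex (V : Fin (d + 1) → Fin d → ℤ) : Set (Fin d → ℝ) :=
  convexHull ℝ (Set.range (realPoints V))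

/-- The matrix with rows `(1, V_i)`. -/
def homogeneousMatrix (V : Fin (d + 1) → Fin d → ℤ) : Matrix (Fin (d + 1)) (Fin (d + 1)) ℤ :=
  Matrix.of fun i => Fin.cons 1 (V i)

/-- The classes modulo `ℤ^(d+1)` of the coefficient vectors `y` with `∑ y_i` an integer and
`∑ y_i V_i` a lattice point. -/
def latticeGroup (V : Fin (d + 1) → Fin d → ℤ) : AddSubgroup (Fin (d + 1) → UnitAddCircle) :=
  torusKernel (homogeneousMatrix V)

lemma mem_latticeGroup {V : Fin (d + 1) → Fin d → ℤ} {g : Fin (d + 1) → UnitAddCircle} :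
    g ∈ latticeGroup V ↔ ∑ i, g i = 0 ∧ ∀ j, ∑ i, V i j • g i = 0 := by
  simp only [latticeGroup, mem_torusKernel, homogeneousMatrix, Matrix.of_apply,
    Fin.forall_fin_succ, Fin.cons_zero, Fin.cons_succ, one_smul]

lemma coe_mem_latticeGroup {V : Fin (d + 1) → Fin d → ℤ} {y : Fin (d + 1) → ℝ} :
    (fun i => (y i : UnitAddCircle)) ∈ latticeGroup V ↔
      (∃ z : ℤ, (z : ℝ) = ∑ i, y i) ∧ ∀ j, ∃ z : ℤ, (z : ℝ) = ∑ i, y i * V i j := by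
  simp only [latticeGroup, coe_mem_torusKernel, homogeneousMatrix, Matrix.of_apply,
    Fin.forall_fin_succ, Fin.cons_zero, Fin.cons_succ, Int.cast_one, mul_one]

lemma det_homogeneousMatrix_ne_zero {V : Fin (d + 1) → Fin d → ℤ}
    (hV : AffineIndependent ℝ (realPoints V)) : (homogeneousMatrix V).det ≠ 0 := by
  rw [Ne, ← Matrix.exists_vecMul_eq_zero_iff]
  rintro ⟨y, hy0, hy⟩
  have hsum : ∑ i, y i = 0 := by
    simpa [Matrix.vecMul, dotProduct, homogeneousMatrix] using congrFun hy 0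
  have hcomb : ∀ j, ∑ i, y i * V i j = 0 := fun j => by
    simpa [Matrix.vecMul, dotProduct, homogeneousMatrix] using congrFun hy j.succ
  refine hy0 (funext fun i => Int.cast_eq_zero (α := ℝ).1 ?_)
  refine affineIndependent_iff.1 hV Finset.univ (fun i => (y i : ℝ)) (mod_cast hsum)
    (funext fun j => ?_) i (Finset.mem_univ i)
  simpa [realPoints] using (mod_cast hcomb j : ∑ i, (y i : ℝ) * V i j = 0)

/-- The affine map `x ↦ xU + w` of a unimodular equivalence. -/
def affineVecMul (U : Matrix (Fin d) (Fin d) ℤ) (w : Fin d → ℤ) :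
    (Fin d → ℝ) →ᵃ[ℝ] (Fin d → ℝ) :=
  (Matrix.vecMulLinear (U.map (fun a : ℤ => (a : ℝ)))).toAffineMap +
    AffineMap.const ℝ _ (fun j => (w j : ℝ))

lemma affineVecMul_comp_realPoints {ι : Type*} (U : Matrix (Fin d) (Fin d) ℤ) (w : Fin d → ℤ)
    (V : ι → Fin d → ℤ) :
    affineVecMul U w ∘ realPoints V = realPoints fun i => Matrix.vecMul (V i) U + w := by
  ext i j
  simp [affineVecMul, realPoints, Matrix.vecMul, dotProduct]

lemma affineVecMul_injective {U : Matrix (Fin d) (Fin d) ℤ} (hU : IsUnit U.det) (w : Fin d → ℤ) :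
    Function.Injective (affineVecMul U w) := by
  have hU' : IsUnit (U.map (fun a : ℤ => (a : ℝ))) :=
    ((Matrix.isUnit_iff_isUnit_det U).2 hU).map (Int.castRingHom ℝ).mapMatrix
  exact fun x y hxy => Matrix.vecMul_injective_of_isUnit hU' (add_right_cancel hxy)

lemma unimodEquiv_latticeSimplex_vecMul_add (V : Fin (d + 1) → Fin d → ℤ)
    {U : Matrix (Fin d) (Fin d) ℤ} (hU : IsUnit U.det) (w : Fin d → ℤ) :
    UnimodEquiv (latticeSimplex V) (latticeSimplex fun i => Matrix.vecMul (V i) U + w) := by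
  refine ⟨U, w, hU, ?_⟩
  rw [latticeSimplex, ← affineVecMul_comp_realPoints, Set.range_comp]
  exact ((affineVecMul U w).image_convexHull _).symm

-- The unimodular `W` relating the homogeneous matrices has first column `(1, 0, …, 0)`, so it acts
-- on the rows `(1, x)` as an affine map `x ↦ xU + w`.
theorem unimodEquiv_of_latticeGroup_eq {V V' : Fin (d + 1) → Fin d → ℤ}
    (hV : AffineIndependent ℝ (realPoints V)) (h : latticeGroup V = latticeGroup V') :
    UnimodEquiv (latticeSimplex V) (latticeSimplex V') := by
  have hdet := det_homogeneousMatrix_ne_zero hV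
  obtain ⟨W, hWdet, hW⟩ := exists_mul_eq_of_torusKernel_eq hdet h
  have hcol : ∀ k, W k 0 = (1 : Matrix (Fin (d + 1)) (Fin (d + 1)) ℤ) k 0 := by
    refine congrFun (sub_eq_zero.1 (Matrix.eq_zero_of_mulVec_eq_zero hdet (v := W.col 0 - _) ?_))
    ext i
    rw [Matrix.mulVec_sub, Pi.sub_apply, Pi.zero_apply, sub_eq_zero]
    exact (congrFun (congrFun hW i) 0).trans
      (congrFun (congrFun (mul_one (homogeneousMatrix V)) i) 0).symm
  have hU : IsUnit (W.submatrix Fin.succ Fin.succ).det := by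
    rw [Matrix.det_succ_column_zero, Fin.sum_univ_succ] at hWdet
    simpa [hcol, Matrix.one_apply] using hWdet
  have hV' : V' = fun i => Matrix.vecMul (V i) (W.submatrix Fin.succ Fin.succ) +
      fun j => W 0 j.succ := by
    ext i j
    have hij := congrFun (congrFun hW i) j.succ
    rw [Matrix.mul_apply, Fin.sum_univ_succ] at hij
    simpa [homogeneousMatrix, Matrix.vecMul, dotProduct, add_comm] using hij.symm
  rw [hV']
  exact unimodEquiv_latticeSimplex_vecMul_add V hU _

lemma latticeSimplex_comp_perm (V : Fin (d + 1) → Fin d → ℤ) (σ : Equiv.Perm (Fin (d + 1))) :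
    latticeSimplex (V ∘ σ) = latticeSimplex V :=
  congrArg (convexHull ℝ) (σ.surjective.range_comp (realPoints V))

lemma comp_perm_mem_latticeGroup_iff {V : Fin (d + 1) → Fin d → ℤ}
    {g : Fin (d + 1) → UnitAddCircle} (σ : Equiv.Perm (Fin (d + 1))) :
    g ∘ σ ∈ latticeGroup (V ∘ σ) ↔ g ∈ latticeGroup V :=
  forall_congr' fun k => iff_of_eq <| congrArg (· = 0) <|
    Equiv.sum_comp σ fun i => homogeneousMatrix V i k • g i

lemma natCard_latticeGroup_comp_perm (V : Fin (d + 1) → Fin d → ℤ)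
    (σ : Equiv.Perm (Fin (d + 1))) :
    Nat.card (latticeGroup (V ∘ σ)) = Nat.card (latticeGroup V) :=
  (Nat.card_congr ((σ.symm.arrowCongr (Equiv.refl UnitAddCircle)).subtypeEquiv
    fun _ => (comp_perm_mem_latticeGroup_iff σ).symm)).symm

end LatticeSimplex

section PowerSeriesCounting

open PowerSeries in
lemma coeff_sum_X_pow_mul_mk_choose {α : Type*} [Fintype α] (φ : α → ℕ) (d n : ℕ) :
    coeff n ((∑ a, (X : ℤ⟦X⟧) ^ φ a) * mk fun m => ((d + m).choose d : ℤ)) =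
      ∑ a, if φ a ≤ n then ((n - φ a + d).choose d : ℤ) else 0 := by
  simp_rw [Finset.sum_mul, map_sum, coeff_X_pow_mul', coeff_mk, add_comm d]

open PowerSeries in
lemma coeff_sum_X_pow {α : Type*} [Fintype α] (φ : α → ℕ) (n : ℕ) :
    coeff n (∑ a, (X : ℤ⟦X⟧) ^ φ a) = Fintype.card {a // φ a = n} := by
  simp_rw [map_sum, coeff_X_pow, Finset.sum_boole, Fintype.card_subtype, eq_comm]

-- Both sides of the hypothesis are the coefficients of `(∑ t ^ φ a) / (1 - t) ^ (d + 1)`.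
lemma exists_equiv_of_sum_choose_eq {α β : Type*} [Fintype α] [Fintype β] {φ : α → ℕ} {ψ : β → ℕ}
    {d : ℕ} (h : ∀ n, ∑ a, (if φ a ≤ n then (n - φ a + d).choose d else 0) =
      ∑ b, if ψ b ≤ n then (n - ψ b + d).choose d else 0) :
    ∃ e : α ≃ β, ∀ a, ψ (e a) = φ a := by
  have hmul : (∑ a, (PowerSeries.X : PowerSeries ℤ) ^ φ a) *
      PowerSeries.mk (fun m => ((d + m).choose d : ℤ)) =
      (∑ b, PowerSeries.X ^ ψ b) * PowerSeries.mk fun m => ((d + m).choose d : ℤ) := by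
    ext n
    rw [coeff_sum_X_pow_mul_mk_choose, coeff_sum_X_pow_mul_mk_choose]
    exact_mod_cast h n
  have hsum := (IsUnit.of_mul_eq_one _
    (PowerSeries.mk_add_choose_mul_one_sub_pow_eq_one ℤ d)).mul_right_cancel hmul
  have hcard (n : ℕ) : Fintype.card {a // φ a = n} = Fintype.card {b // ψ b = n} := by
    have hn := congrArg (PowerSeries.coeff n) hsum
    rw [coeff_sum_X_pow, coeff_sum_X_pow] at hn
    exact_mod_cast hn
  exact ⟨Equiv.ofFiberEquiv fun n => Fintype.equivOfCardEq (hcard n), Equiv.ofFiberEquiv_map _⟩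

lemma card_piAntidiag_univ_fin (d n : ℕ) :
    (Finset.piAntidiag (Finset.univ : Finset (Fin (d + 1))) n).card = (n + d).choose d := by
  rw [← Fintype.card_coe, ← Fintype.card_congr
    ((Sym.equivNatSumOfFintype (Fin (d + 1)) n).trans
      (Equiv.subtypeEquivRight fun P => by simp)), Sym.card_sym_eq_choose, Fintype.card_fin,
    show d + 1 + n - 1 = n + d by omega, Nat.choose_symm_add]

end PowerSeriesCounting

section Ehrhart

lemma smul_stdSimplex {ι : Type*} [Fintype ι] [Nonempty ι] {c : ℝ} (hc : 0 ≤ c) :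
    c • stdSimplex ℝ ι = {y | (∀ i, 0 ≤ y i) ∧ ∑ i, y i = c} := by
  classical
  ext y
  constructor
  · rintro ⟨w, ⟨hw0, hw1⟩, rfl⟩
    exact ⟨fun i => mul_nonneg hc (hw0 i), by
      simp_rw [Pi.smul_apply, smul_eq_mul, ← Finset.mul_sum, hw1, mul_one]⟩
  · rintro ⟨hy0, hy⟩
    obtain rfl | hc := hc.eq_or_lt
    · have hy : y = 0 := (Fintype.sum_eq_zero_iff_of_nonneg hy0).1 hy
      rw [Set.zero_smul_set ⟨_, single_mem_stdSimplex ℝ (Classical.arbitrary ι)⟩, hy]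
      exact Set.zero_mem_zero
    · refine (Set.mem_smul_set_iff_inv_smul_mem₀ hc.ne' _ _).2
        ⟨fun i => mul_nonneg (inv_nonneg.2 hc.le) (hy0 i), ?_⟩
      simp_rw [Pi.smul_apply, smul_eq_mul, ← Finset.mul_sum, hy, inv_mul_cancel₀ hc.ne']

variable {d : ℕ} {V : Fin (d + 1) → Fin d → ℤ}

lemma mem_smul_latticeSimplex_iff {n : ℕ} {x : Fin d → ℝ} :
    x ∈ (n : ℝ) • latticeSimplex V ↔
      ∃ y : Fin (d + 1) → ℝ, ((∀ i, 0 ≤ y i) ∧ ∑ i, y i = n) ∧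
        Matrix.vecMul y (Matrix.of (realPoints V)) = x := by
  let L := Matrix.vecMulLinear (Matrix.of (realPoints V))
  have hrange : Set.range (realPoints V) = L '' Set.range fun i => Pi.single i (1 : ℝ) := by
    rw [← Set.range_comp]
    exact congrArg Set.range (funext fun i =>
      (Matrix.single_one_vecMul i (Matrix.of (realPoints V))).symm)
  rw [latticeSimplex, hrange, ← L.image_convexHull, convexHull_rangle_single_eq_stdSimplex,
    ← image_smul_set, smul_stdSimplex n.cast_nonneg]
  rfl

/-- The barycentric coefficients, scaled by `n`, of the lattice points of the `n`-th dilate of a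
lattice simplex. -/
def latticeCoefficients (V : Fin (d + 1) → Fin d → ℤ) (n : ℕ) : Set (Fin (d + 1) → ℝ) :=
  {y | (∀ i, 0 ≤ y i) ∧ ∑ i, y i = n ∧ (fun i => (y i : UnitAddCircle)) ∈ latticeGroup V}

lemma injOn_vecMul_latticeCoefficients (hV : AffineIndependent ℝ (realPoints V)) (n : ℕ) :
    Set.InjOn (fun y => Matrix.vecMul y (Matrix.of (realPoints V)))
      (latticeCoefficients V n) := by
  intro y hy y' hy' h
  refine funext fun i => sub_eq_zero.1 ?_
  refine affineIndependent_iff.1 hV Finset.univ (fun i => y i - y' i) ?_ ?_ i (Finset.mem_univ i)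
  · rw [Finset.sum_sub_distrib, hy.2.1, hy'.2.1, sub_self]
  · ext j
    simpa [sub_smul, sub_eq_zero, Matrix.vecMul, dotProduct] using congrFun h j

lemma latticePointCount_smul_latticeSimplex (hV : AffineIndependent ℝ (realPoints V)) (n : ℕ) :
    latticePointCount ((n : ℝ) • latticeSimplex V) = (latticeCoefficients V n).ncard := by
  have hcast : Function.Injective fun (z : Fin d → ℤ) (j : Fin d) => (z j : ℝ) :=
    fun z z' h => funext fun j => Int.cast_injective (congrFun h j)
  rw [latticePointCount, ← Set.ncard_image_of_injective _ hcast,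
    ← (injOn_vecMul_latticeCoefficients hV n).ncard_image]
  congr 1
  ext x
  constructor
  · rintro ⟨z, hz, rfl⟩
    obtain ⟨y, ⟨hy0, hyn⟩, hyz⟩ := mem_smul_latticeSimplex_iff.1 hz
    exact ⟨y, ⟨hy0, hyn, coe_mem_latticeGroup.2
      ⟨⟨n, by rw [hyn, Int.cast_natCast]⟩, fun j => ⟨z j, (congrFun hyz j).symm⟩⟩⟩, hyz⟩
  · rintro ⟨y, ⟨hy0, hyn, hy⟩, rfl⟩
    choose z hz using (coe_mem_latticeGroup.1 hy).2
    exact ⟨z, mem_smul_latticeSimplex_iff.2 ⟨y, ⟨hy0, hyn⟩, (funext hz).symm⟩, funext hz⟩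

/-- The vector with classes `g` modulo `ℤ` and integral parts `m`. -/
noncomputable def liftWithFloor {ι : Type*} (g : ι → UnitAddCircle) (m : ι → ℕ) : ι → ℝ :=
  fun i => unitRep (g i) + m i

lemma coe_liftWithFloor {ι : Type*} (g : ι → UnitAddCircle) (m : ι → ℕ) (i : ι) :
    (liftWithFloor g m i : UnitAddCircle) = g i := by
  rw [liftWithFloor, AddCircle.coe_add, coe_unitRep,
    unitAddCircle_coe_eq_zero_iff.2 ⟨m i, Int.cast_natCast _⟩, add_zero]

lemma liftWithFloor_injective2 {ι : Type*} :
    Function.Injective2 (liftWithFloor : (ι → UnitAddCircle) → (ι → ℕ) → ι → ℝ) := by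
  intro g g' m m' h
  obtain rfl : g = g' := funext fun i => by
    rw [← coe_liftWithFloor g m i, h, coe_liftWithFloor]
  exact ⟨rfl, funext fun i => Nat.cast_injective (R := ℝ) (add_left_cancel (congrFun h i))⟩

lemma liftWithFloor_coe_floor {ι : Type*} {y : ι → ℝ} (hy : ∀ i, 0 ≤ y i) :
    liftWithFloor (fun i => (y i : UnitAddCircle)) (fun i => ⌊y i⌋₊) = y :=
  funext fun i => by
    rw [liftWithFloor, unitRep_coe, natCast_floor_eq_intCast_floor (hy i), Int.fract_add_floor]

lemma sum_liftWithFloor {ι : Type*} [Fintype ι] (g : ι → UnitAddCircle) (m : ι → ℕ) :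
    ∑ i, liftWithFloor g m i = height g + (∑ i, m i : ℕ) := by
  rw [height, Nat.cast_sum, ← Finset.sum_add_distrib]
  rfl

lemma natCast_floor_height {g : Fin (d + 1) → UnitAddCircle} (hg : g ∈ latticeGroup V) :
    (⌊height g⌋₊ : ℝ) = height g := by
  have hsum : ((height g : ℝ) : UnitAddCircle) = 0 := by
    simp_rw [height, coe_sum_unitAddCircle, coe_unitRep]
    exact (mem_latticeGroup.1 hg).1
  obtain ⟨z, hz⟩ := unitAddCircle_coe_eq_zero_iff.1 hsum
  rw [natCast_floor_eq_intCast_floor (height_nonneg g), ← hz, Int.floor_intCast]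

lemma liftWithFloor_mem_latticeCoefficients_iff {g : Fin (d + 1) → UnitAddCircle}
    (hg : g ∈ latticeGroup V) {m : Fin (d + 1) → ℕ} {n : ℕ} :
    liftWithFloor g m ∈ latticeCoefficients V n ↔ ⌊height g⌋₊ + ∑ i, m i = n := by
  have hsum : ∑ i, liftWithFloor g m i = n ↔ ⌊height g⌋₊ + ∑ i, m i = n := by
    rw [sum_liftWithFloor, ← natCast_floor_height hg, Nat.floor_natCast]
    exact_mod_cast Iff.rfl
  refine ⟨fun h => hsum.1 h.2.1, fun h => ⟨fun i => ?_, hsum.2 h, ?_⟩⟩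
  · exact add_nonneg (unitRep_nonneg _) (Nat.cast_nonneg _)
  · simpa only [coe_liftWithFloor] using hg

lemma ncard_latticeCoefficients [Fintype (latticeGroup V)] (n : ℕ) :
    (latticeCoefficients V n).ncard = ∑ g : latticeGroup V,
      if ⌊height g.1⌋₊ ≤ n then (n - ⌊height g.1⌋₊ + d).choose d else 0 := by
  classical
  set T : latticeGroup V → Finset (Fin (d + 1) → ℕ) := fun g =>
    if ⌊height g.1⌋₊ ≤ n then Finset.piAntidiag Finset.univ (n - ⌊height g.1⌋₊) else ∅ with hT
  have hmemT (g : latticeGroup V) (m : Fin (d + 1) → ℕ) :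
      m ∈ T g ↔ ⌊height g.1⌋₊ + Finset.univ.sum m = n := by
    rw [hT]
    dsimp only
    split_ifs with h
    · simp only [Finset.mem_piAntidiag, Finset.mem_univ, implies_true, and_true]
      omega
    · simp only [Finset.notMem_empty, false_iff]
      omega
  let lift : (Σ _ : latticeGroup V, Fin (d + 1) → ℕ) → Fin (d + 1) → ℝ :=
    fun t => liftWithFloor t.1.1 t.2
  have hlift : lift.Injective := fun t t' h => by
    obtain ⟨hg, hm⟩ := liftWithFloor_injective2 h
    exact Sigma.ext (Subtype.ext hg) (heq_of_eq hm)
  have himage : latticeCoefficients V n = (Finset.univ.sigma T).image lift := by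
    ext y
    simp only [Finset.coe_image, Finset.coe_sigma, Set.mem_image, Set.mem_sigma_iff,
      Finset.mem_coe, Finset.mem_univ, true_and, hmemT]
    constructor
    · intro hy
      have hlift_y := liftWithFloor_coe_floor hy.1
      exact ⟨⟨⟨_, hy.2.2⟩, _⟩,
        (liftWithFloor_mem_latticeCoefficients_iff hy.2.2).1 (hlift_y.symm ▸ hy), hlift_y⟩
    · rintro ⟨t, ht, rfl⟩
      exact (liftWithFloor_mem_latticeCoefficients_iff t.1.2).2 ht
  rw [himage, Set.ncard_coe_finset, Finset.card_image_of_injective _ hlift, Finset.card_sigma]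
  refine Finset.sum_congr rfl fun g _ => ?_
  rw [hT, apply_ite Finset.card, card_piAntidiag_univ_fin, Finset.card_empty]

theorem exists_isHeightIndex {k N : ℕ} (hV : AffineIndependent ℝ (realPoints V))
    (hδ : HasDeltaPolySimplex d N k (latticeSimplex V)) :
    ∃ e : latticeGroup V ≃ Fin N, IsHeightIndex (k + 1) e := by
  have : Finite (latticeGroup V) := finite_torusKernel (det_homogeneousMatrix_ne_zero hV)
  have := Fintype.ofFinite (latticeGroup V)
  obtain ⟨e, he⟩ := exists_equiv_of_sum_choose_eq (φ := fun g : latticeGroup V => ⌊height g.1⌋₊)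
    (ψ := fun j : Fin N => j * (k + 1)) (d := d) fun n => by
      rw [← ncard_latticeCoefficients, ← latticePointCount_smul_latticeSimplex hV, hδ n,
        Finset.sum_range]
  refine ⟨e, k.succ_pos, fun g => ?_⟩
  rw [← natCast_floor_height g.2, ← he, Nat.cast_mul, mul_comm]

end Ehrhart

section Pyramid

variable {d e : ℕ}

lemma exists_basis_last_eq {u l : Fin (e + 1) → ℤ} (hul : u ⬝ᵥ l = 1) :
    ∃ b : Module.Basis (Fin (e + 1)) ℤ (Fin (e + 1) → ℤ),
      b (Fin.last e) = u ∧ ∀ i : Fin e, b i.castSucc ⬝ᵥ l = 0 := by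
  let φ := Fintype.linearCombination ℤ l
  have hφ (v : Fin (e + 1) → ℤ) : φ v = v ⬝ᵥ l := rfl
  have hrange : LinearMap.range φ = ⊤ :=
    LinearMap.range_eq_top.2 fun z => ⟨z • u, by rw [map_smul, hφ, hul, smul_eq_mul, mul_one]⟩
  have hrank : Module.finrank ℤ (LinearMap.ker φ) = e := by
    have := Submodule.finrank_quotient_add_finrank (LinearMap.ker φ)
    rw [φ.quotKerEquivRange.finrank_eq, hrange, finrank_top, Module.finrank_self,
      Module.finrank_fin_fun] at this
    omega
  refine ⟨Module.Basis.mkFinSnoc (Module.finBasisOfFinrankEq ℤ _ hrank) u (fun c x hx h => ?_)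
    (fun z => ⟨-φ z, ?_⟩), by simp, fun i => ?_⟩
  · have hc := congrArg φ h
    rw [map_add, LinearMap.mem_ker.1 hx, map_smul, hφ u, hul, map_zero] at hc
    simpa using hc
  · rw [LinearMap.mem_ker, map_add, map_smul, hφ u, hul, smul_eq_mul, mul_one, add_neg_cancel]
  · rw [← hφ, Module.Basis.coe_mkFinSnoc, Fin.snoc_castSucc]
    exact (Module.finBasisOfFinrankEq ℤ _ hrank i).2

lemma exists_isUnit_det_vecMul_last {u l : Fin (e + 1) → ℤ} (hul : u ⬝ᵥ l = 1) :
    ∃ U : Matrix (Fin (e + 1)) (Fin (e + 1)) ℤ, IsUnit U.det ∧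
      Matrix.vecMul u U = Pi.single (Fin.last e) 1 ∧
      ∀ v, Matrix.vecMul v U (Fin.last e) = v ⬝ᵥ l := by
  obtain ⟨b, hbu, hbl⟩ := exists_basis_last_eq hul
  have hU (v : Fin (e + 1) → ℤ) :
      Matrix.vecMul v (b.toMatrix (Pi.basisFun ℤ (Fin (e + 1)))).transpose = b.repr v := by
    rw [Matrix.vecMul_transpose]
    exact (Pi.basisFun ℤ (Fin (e + 1))).toMatrix_mulVec_repr b v
  refine ⟨(b.toMatrix (Pi.basisFun ℤ (Fin (e + 1)))).transpose, ?_, ?_, fun v => ?_⟩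
  · rw [Matrix.det_transpose, ← Module.Basis.det_apply]
    exact b.isUnit_det _
  · rw [hU, ← hbu, b.repr_self, Finsupp.single_eq_pi_single]
  · rw [hU]
    conv_rhs => rw [← b.sum_repr v, Fin.sum_univ_castSucc]
    simp only [add_dotProduct, sum_dotProduct, smul_dotProduct, hbl, hbu, hul, smul_eq_mul,
      mul_zero, Finset.sum_const_zero, zero_add, mul_one]

lemma exists_add_dotProduct_eq_ite {V : Fin (d + 1) → Fin d → ℤ} {i₀ : Fin (d + 1)}
    (h₀ : ∀ g ∈ latticeGroup V, g i₀ = 0) :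
    ∃ (c : ℤ) (l : Fin d → ℤ), ∀ i, c + V i ⬝ᵥ l = if i = i₀ then 1 else 0 := by
  obtain ⟨W, hW⟩ := exists_mul_eq_of_torusKernel_le (M := homogeneousMatrix V)
    (M' := Matrix.of fun i (_ : Unit) => if i = i₀ then 1 else 0) fun g hg k => by
      simpa using h₀ g hg
  refine ⟨W 0 (), fun j => W j.succ (), fun i => ?_⟩
  have hWi := congrFun (congrFun hW i) ()
  rw [Matrix.mul_apply, Fin.sum_univ_succ] at hWi
  simpa [homogeneousMatrix, dotProduct] using hWi

lemma exists_unimodular_apex {V : Fin (e + 1 + 1) → Fin (e + 1) → ℤ} {i₀ : Fin (e + 1 + 1)}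
    (h₀ : ∀ g ∈ latticeGroup V, g i₀ = 0) :
    ∃ (U : Matrix (Fin (e + 1)) (Fin (e + 1)) ℤ) (w : Fin (e + 1) → ℤ), IsUnit U.det ∧
      Matrix.vecMul (V i₀) U + w = Pi.single (Fin.last e) 1 ∧
      ∀ i ≠ i₀, (Matrix.vecMul (V i) U + w) (Fin.last e) = 0 := by
  obtain ⟨c, l, hl⟩ := exists_add_dotProduct_eq_ite h₀
  have hl₀ : V i₀ ⬝ᵥ l = 1 - c := by rw [eq_sub_iff_add_eq', hl, if_pos rfl]
  have hl₁ : ∀ i ≠ i₀, V i ⬝ᵥ l = -c := fun i hi => by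
    rw [eq_neg_iff_add_eq_zero, add_comm, hl, if_neg hi]
  set i₁ := i₀.succAbove 0
  have hi₁ : i₁ ≠ i₀ := Fin.succAbove_ne i₀ 0
  obtain ⟨U, hU, hapex, hlast⟩ := exists_isUnit_det_vecMul_last (u := V i₀ - V i₁) (l := l) (by
    rw [sub_dotProduct, hl₀, hl₁ i₁ hi₁, sub_neg_eq_add, sub_add_cancel])
  refine ⟨U, -Matrix.vecMul (V i₁) U, hU, ?_, fun i hi => ?_⟩
  · rw [← sub_eq_add_neg, ← Matrix.sub_vecMul, hapex]
  · rw [Pi.add_apply, Pi.neg_apply, hlast, hlast, hl₁ i hi, hl₁ i₁ hi₁, add_neg_cancel]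

/-- The inclusion of `ℝ^e` in `ℝ^(e+1)` as the hyperplane where the last coordinate vanishes. -/
def snocZero (e : ℕ) : (Fin e → ℝ) →ₗ[ℝ] (Fin (e + 1) → ℝ) where
  toFun x := Fin.snoc x 0
  map_add' x y := by ext j; refine Fin.lastCases ?_ (fun j => ?_) j <;> simp
  map_smul' c x := by ext j; refine Fin.lastCases ?_ (fun j => ?_) j <;> simp

variable {V : Fin (e + 1 + 1) → Fin (e + 1) → ℤ} {i₀ : Fin (e + 1 + 1)}

/-- The facet opposite to the vertex `V i₀`, projected along the last coordinate. -/
def oppositeFacet (V : Fin (e + 1 + 1) → Fin (e + 1) → ℤ) (i₀ : Fin (e + 1 + 1)) :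
    Fin (e + 1) → Fin e → ℤ :=
  fun i j => V (i₀.succAbove i) j.castSucc

lemma snocZero_comp_realPoints_oppositeFacet (h : ∀ i ≠ i₀, V i (Fin.last e) = 0) :
    snocZero e ∘ realPoints (oppositeFacet V i₀) = realPoints V ∘ i₀.succAbove := by
  ext i j
  refine Fin.lastCases ?_ (fun j => ?_) j
  · simp [snocZero, realPoints, h _ (Fin.succAbove_ne i₀ i)]
  · simp [snocZero, realPoints, oppositeFacet]

lemma isLatticeSimplex_oppositeFacet (hV : AffineIndependent ℝ (realPoints V))
    (h : ∀ i ≠ i₀, V i (Fin.last e) = 0) :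
    IsLatticeSimplex (latticeSimplex (oppositeFacet V i₀)) := by
  refine ⟨oppositeFacet V i₀, AffineIndependent.of_comp (snocZero e).toAffineMap ?_, rfl⟩
  have hfacet := hV.comp_embedding i₀.succAboveEmb
  exact (snocZero_comp_realPoints_oppositeFacet h).symm ▸ hfacet

lemma latticeSimplex_eq_pyr (hapex : V i₀ = Pi.single (Fin.last e) 1)
    (h : ∀ i ≠ i₀, V i (Fin.last e) = 0) :
    latticeSimplex V = Pyr (latticeSimplex (oppositeFacet V i₀)) := by
  have hapex' : realPoints V i₀ = Fin.snoc (0 : Fin e → ℝ) 1 := by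
    ext j
    refine Fin.lastCases ?_ (fun j => ?_) j <;> simp [realPoints, hapex]
  have hrange : Set.range (realPoints V) =
      Set.range (realPoints V ∘ i₀.succAbove) ∪ {realPoints V i₀} := by
    ext x
    simp only [Set.mem_range, Set.mem_union, Set.mem_singleton_iff, Function.comp_apply,
      Fin.exists_iff_succAbove i₀, or_comm, eq_comm (a := x)]
  rw [latticeSimplex, hrange, hapex', ← snocZero_comp_realPoints_oppositeFacet h, Set.range_comp,
    ← convexHull_convexHull_union_left, ← (snocZero e).image_convexHull]
  rfl

theorem exists_unimodEquiv_pyr (hV : AffineIndependent ℝ (realPoints V))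
    (h₀ : ∀ g ∈ latticeGroup V, g i₀ = 0) :
    ∃ Q : Set (Fin e → ℝ), IsLatticeSimplex Q ∧ UnimodEquiv (latticeSimplex V) (Pyr Q) := by
  obtain ⟨U, w, hU, hapex, hlast⟩ := exists_unimodular_apex h₀
  have hV' := hV.map' (affineVecMul U w) (affineVecMul_injective hU w)
  rw [affineVecMul_comp_realPoints] at hV'
  refine ⟨_, isLatticeSimplex_oppositeFacet hV' hlast, ?_⟩
  rw [← latticeSimplex_eq_pyr hapex hlast]
  exact unimodEquiv_latticeSimplex_vecMul_add V hU w

theorem exists_mem_latticeGroup_apply_ne_zero {V : Fin (d + 1) → Fin d → ℤ}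
    (hV : AffineIndependent ℝ (realPoints V)) (hG : Nontrivial (latticeGroup V))
    (hpyr : ¬ ∃ (e : ℕ) (h : d = e + 1) (Q : Set (Fin e → ℝ)), IsLatticeSimplex Q ∧
      UnimodEquiv ((fun x : Fin d → ℝ => x ∘ finCongr h.symm) '' latticeSimplex V) (Pyr Q))
    (i : Fin (d + 1)) : ∃ g ∈ latticeGroup V, g i ≠ 0 := by
  by_contra! h₀
  obtain _ | e := d
  · obtain ⟨g, hg, hg0⟩ := (AddSubgroup.nontrivial_iff_exists_ne_zero _).1 hG
    exact hg0 (funext fun j => (Fin.ext (by omega) : i = j) ▸ h₀ g hg)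
  · obtain ⟨Q, hQ, hVQ⟩ := exists_unimodEquiv_pyr hV h₀
    refine hpyr ⟨e, rfl, Q, hQ, ?_⟩
    rwa [show (fun x : Fin (e + 1) → ℝ => x ∘ finCongr rfl) = id from rfl, Set.image_id]

end Pyramid

section ExplicitSimplices

variable {d : ℕ}

lemma unimodEquiv_of_latticeGroup_le {V V' : Fin (d + 1) → Fin d → ℤ}
    (hV : AffineIndependent ℝ (realPoints V)) (h : latticeGroup V' ≤ latticeGroup V)
    (hdvd : Nat.card (latticeGroup V) ∣ Nat.card (latticeGroup V')) :
    UnimodEquiv (latticeSimplex V) (latticeSimplex V') := by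
  have : Finite (latticeGroup V) := finite_torusKernel (det_homogeneousMatrix_ne_zero hV)
  have : Finite (latticeGroup V') := Finite.of_injective _ (AddSubgroup.inclusion_injective h)
  exact unimodEquiv_of_latticeGroup_eq hV
    (AddSubgroup.eq_of_le_of_card_ge h (Nat.le_of_dvd Nat.card_pos hdvd)).symm

lemma dvd_natCard_of_apply_eq_unitFraction {ι : Type*} {L : AddSubgroup (ι → UnitAddCircle)}
    {g : ι → UnitAddCircle} (hg : g ∈ L) {n : ℕ} (hn : 0 < n) {i : ι}
    (hi : g i = unitFraction n) : n ∣ Nat.card L := by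
  rw [← addOrderOf_unitFraction hn, ← hi]
  exact (addOrderOf_map_dvd ((Pi.evalAddMonoidHom _ i).comp L.subtype) ⟨g, hg⟩).trans
    (addOrderOf_dvd_natCard _)

/-- The origin and the points `e_i + r_i`. -/
def shiftedUnits (r : Fin d → Fin d → ℤ) : Fin (d + 1) → Fin d → ℤ :=
  Fin.cons 0 fun i => Pi.single i 1 + r i

lemma latticeSimplex_shiftedUnits (r : Fin d → Fin d → ℤ) :
    latticeSimplex (shiftedUnits r) = convexHull ℝ (insert 0 (Set.range fun i =>
      (Pi.single i 1 : Fin d → ℝ) + fun j => (r i j : ℝ))) := by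
  rw [latticeSimplex, ← Fin.range_cons]
  congr 2
  ext i j
  refine Fin.cases ?_ (fun i => ?_) i
  · simp [realPoints, shiftedUnits]
  · simp [realPoints, shiftedUnits, Pi.single_apply]

lemma mem_latticeGroup_shiftedUnits {r : Fin d → Fin d → ℤ} {g : Fin (d + 1) → UnitAddCircle} :
    g ∈ latticeGroup (shiftedUnits r) ↔
      ∑ i, g i = 0 ∧ ∀ j, g j.succ + ∑ i, r i j • g i.succ = 0 := by
  simp [mem_latticeGroup, shiftedUnits, Fin.sum_univ_succ (n := d), Pi.single_apply, add_smul,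
    Finset.sum_add_distrib, ite_smul]

lemma eq_zero_of_mem_latticeGroup_shiftedUnits {r : Fin d → Fin d → ℤ}
    {g : Fin (d + 1) → UnitAddCircle} (hg : g ∈ latticeGroup (shiftedUnits r))
    (h : ∀ i, r i ≠ 0 → g i.succ = 0) : g = 0 := by
  obtain ⟨hsum, hg⟩ := mem_latticeGroup_shiftedUnits.1 hg
  have hr : ∀ i j, r i j • g i.succ = 0 := fun i j => by
    by_cases hi : r i = 0
    · rw [hi, Pi.zero_apply, zero_smul]
    · rw [h i hi, smul_zero]
  have hsucc : ∀ j : Fin d, g j.succ = 0 := fun j => by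
    simpa only [hr, Finset.sum_const_zero, add_zero] using hg j
  rw [Fin.sum_univ_succ, Finset.sum_eq_zero fun j _ => hsucc j, add_zero] at hsum
  exact funext (Fin.cases hsum hsucc)

lemma lastEntry_eq_apply_last (A : Fin (d + 1) → ℤ) : lastEntry A = A (Fin.last d) :=
  dif_pos d.succ_pos

/-- The vertices of `Δ(A)`. -/
def verticesA (A : Fin (d + 1) → ℤ) : Fin (d + 1 + 1) → Fin (d + 1) → ℤ :=
  shiftedUnits (Pi.single (Fin.last d) fun j =>
    A (Fin.last d) - Function.update A (Fin.last d) 1 j)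

lemma simplexA_eq_latticeSimplex (A : Fin (d + 1) → ℤ) :
    simplexA A = latticeSimplex (verticesA A) := by
  rw [verticesA, latticeSimplex_shiftedUnits, simplexA]
  congr 3
  ext i j
  cases i using Fin.lastCases with
  | last => cases j using Fin.lastCases <;> simp [rowA, lastEntry_eq_apply_last]
  | cast i => simp

lemma mem_latticeGroup_verticesA {A : Fin (d + 1) → ℤ} {g : Fin (d + 1 + 1) → UnitAddCircle} :
    g ∈ latticeGroup (verticesA A) ↔ ∑ i, g i = 0 ∧ ∀ j, g j.succ +
      (A (Fin.last d) - Function.update A (Fin.last d) 1 j) • g (Fin.last d).succ = 0 := by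
  simp [verticesA, mem_latticeGroup_shiftedUnits, Pi.single_apply, ite_apply, ite_smul]

theorem unimodEquiv_simplexA {V : Fin (d + 1 + 1) → Fin (d + 1) → ℤ}
    (hV : AffineIndependent ℝ (realPoints V)) {N : ℕ} (hN : 0 < N)
    (hcard : Nat.card (latticeGroup V) = N) {A : Fin (d + 1) → ℤ} (hA : A (Fin.last d) = N)
    {g : Fin (d + 1 + 1) → UnitAddCircle} (hg : g ∈ latticeGroup V)
    (hgA : ∀ j : Fin (d + 1),
      g j.succ = Function.update A (Fin.last d) 1 j • unitFraction N) :
    UnimodEquiv (latticeSimplex V) (simplexA A) := by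
  rw [simplexA_eq_latticeSimplex]
  have hgt : g (Fin.last d).succ = unitFraction N := by
    rw [hgA, Function.update_self, one_smul]
  have hg' : g ∈ latticeGroup (verticesA A) :=
    mem_latticeGroup_verticesA.2 ⟨(mem_latticeGroup.1 hg).1, fun j => by
      rw [hgA, hgt, ← add_smul, add_sub_cancel, hA, natCast_zsmul, nsmul_unitFraction_self]⟩
  refine unimodEquiv_of_latticeGroup_le hV (fun x hx => ?_)
    (hcard ▸ dvd_natCard_of_apply_eq_unitFraction hg' hN hgt)
  have hxt : N • x (Fin.last d).succ = 0 := by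
    have := (mem_latticeGroup_verticesA.1 hx).2 (Fin.last d)
    rwa [Function.update_self, hA, sub_smul, one_smul, add_sub_cancel, natCast_zsmul] at this
  obtain ⟨m, hm⟩ := exists_nsmul_unitFraction_eq hN hxt
  suffices x - m • g = 0 from sub_eq_zero.1 this ▸ nsmul_mem hg m
  refine eq_zero_of_mem_latticeGroup_shiftedUnits (sub_mem hx (nsmul_mem hg' m)) fun i hi => ?_
  obtain rfl : i = Fin.last d := by_contra fun hne => hi (Pi.single_eq_of_ne hne _)
  rw [Pi.sub_apply, Pi.smul_apply, hgt, hm, sub_self]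

/-- The vertices of `Δ(B, C)` for `B = (1, …, 1, p)` of length `s + 1` and
`C = (q, …, q, 1, …, 1, q)` starting with `s + 1` entries `q`. -/
def verticesBC (s : Fin d) (p q : ℤ) : Fin (d + 1 + 1) → Fin (d + 1) → ℤ :=
  shiftedUnits (Pi.single s.castSucc (fun j => if j ≤ s.castSucc then p - 1 else 0) +
    Pi.single (Fin.last d) fun j => if j ≤ s.castSucc then 0 else q - 1)

lemma simplexBC_eq_latticeSimplex {s : Fin d} {p q : ℤ} {B : Fin (s + 1) → ℤ}
    {C : Fin (d + 1) → ℤ} (hB : ∀ i : Fin (s + 1), B i = if (i : ℕ) < s then 1 else p)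
    (hC : ∀ i, C i = if i ≤ s.castSucc ∨ i = Fin.last d then q else 1) :
    simplexBC (s + 1) B C = latticeSimplex (verticesBC s p q) := by
  have hBlast : lastEntry B = p := by rw [lastEntry_eq_apply_last, hB, if_neg (by simp)]
  have hClast : lastEntry C = q := by rw [lastEntry_eq_apply_last, hC, if_pos (.inr rfl)]
  rw [verticesBC, latticeSimplex_shiftedUnits, simplexBC]
  congr 3
  ext i j
  have hs := s.2
  have hj := j.2
  simp only [rowA, rowB, hBlast, hClast, hB, hC, Pi.add_apply, Pi.single_apply, ite_apply,
    Fin.ext_iff, Fin.le_def, Fin.val_castSucc, Fin.val_last]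
  split_ifs <;> first | omega | simp

lemma mem_latticeGroup_verticesBC {s : Fin d} {p q : ℤ}
    {g : Fin (d + 1 + 1) → UnitAddCircle} :
    g ∈ latticeGroup (verticesBC s p q) ↔ ∑ i, g i = 0 ∧ ∀ j, g j.succ +
      (if j ≤ s.castSucc then (p - 1) • g s.castSucc.succ else (q - 1) • g (Fin.last d).succ) =
        0 := by
  rw [verticesBC, mem_latticeGroup_shiftedUnits]
  refine and_congr_right fun _ => forall_congr' fun j => ?_
  by_cases hj : j ≤ s.castSucc <;> simp [hj, Pi.single_apply, ite_apply, ite_smul]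

lemma unitFraction_add_sub_one_smul (n : ℕ) :
    unitFraction n + (n - 1 : ℤ) • unitFraction n = 0 := by
  rw [sub_smul, one_smul, add_sub_cancel, natCast_zsmul, nsmul_unitFraction_self]

lemma exists_eq_nsmul_add_nsmul_of_mem_latticeGroup_verticesBC {s : Fin d} {p q : ℕ} (hp : 0 < p)
    (hq : 0 < q) {h g : Fin (d + 1 + 1) → UnitAddCircle}
    (hh : h ∈ latticeGroup (verticesBC s p q)) (hg : g ∈ latticeGroup (verticesBC s p q))
    (hhs : h s.castSucc.succ = unitFraction p) (hht : h (Fin.last d).succ = 0)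
    (hgs : g s.castSucc.succ = 0) (hgt : g (Fin.last d).succ = unitFraction q)
    {x : Fin (d + 1 + 1) → UnitAddCircle} (hx : x ∈ latticeGroup (verticesBC s p q)) :
    ∃ m l : ℕ, x = m • h + l • g := by
  have hx' := (mem_latticeGroup_verticesBC.1 hx).2
  have hxs : p • x s.castSucc.succ = 0 := by
    have := hx' s.castSucc
    rwa [if_pos le_rfl, sub_smul, one_smul, add_sub_cancel, natCast_zsmul] at this
  have hxt : q • x (Fin.last d).succ = 0 := by
    have := hx' (Fin.last d)
    rwa [if_neg (not_le.2 s.castSucc_lt_last), sub_smul, one_smul, add_sub_cancel,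
      natCast_zsmul] at this
  obtain ⟨m, hm⟩ := exists_nsmul_unitFraction_eq hp hxs
  obtain ⟨l, hl⟩ := exists_nsmul_unitFraction_eq hq hxt
  refine ⟨m, l, sub_eq_zero.1 (eq_zero_of_mem_latticeGroup_shiftedUnits
    (sub_mem hx (add_mem (nsmul_mem hh m) (nsmul_mem hg l))) fun i hi => ?_)⟩
  obtain rfl | rfl : i = s.castSucc ∨ i = Fin.last d := by
    by_contra! hne
    exact hi (by rw [Pi.add_apply, Pi.single_eq_of_ne hne.1, Pi.single_eq_of_ne hne.2, add_zero])
  · simp [hhs, hgs, hm]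
  · simp [-Fin.succ_last, hht, hgt, hl]

theorem unimodEquiv_simplexBC {V : Fin (d + 1 + 1) → Fin (d + 1) → ℤ}
    (hV : AffineIndependent ℝ (realPoints V)) {p q : ℕ} (hp : 0 < p) (hq : 0 < q)
    (hpq : p.Coprime q) (hcard : Nat.card (latticeGroup V) = p * q) {s : Fin d}
    {B : Fin (s + 1) → ℤ} {C : Fin (d + 1) → ℤ}
    (hB : ∀ i : Fin (s + 1), B i = if (i : ℕ) < s then 1 else (p : ℤ))
    (hC : ∀ i, C i = if i ≤ s.castSucc ∨ i = Fin.last d then (q : ℤ) else 1)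
    {h g : Fin (d + 1 + 1) → UnitAddCircle} (hh : h ∈ latticeGroup V) (hg : g ∈ latticeGroup V)
    (hhp : ∀ j : Fin (d + 1), h j.succ = if j ≤ s.castSucc then unitFraction p else 0)
    (hgq : ∀ j : Fin (d + 1), g j.succ = if j ≤ s.castSucc then 0 else unitFraction q) :
    UnimodEquiv (latticeSimplex V) (simplexBC (s + 1) B C) := by
  rw [simplexBC_eq_latticeSimplex hB hC]
  have hlast : ¬ Fin.last d ≤ s.castSucc := not_le.2 s.castSucc_lt_last
  have hhs : h s.castSucc.succ = unitFraction p := by rw [hhp, if_pos le_rfl]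
  have hht : h (Fin.last d).succ = 0 := by rw [hhp, if_neg hlast]
  have hgs : g s.castSucc.succ = 0 := by rw [hgq, if_pos le_rfl]
  have hgt : g (Fin.last d).succ = unitFraction q := by rw [hgq, if_neg hlast]
  have hh' : h ∈ latticeGroup (verticesBC s p q) :=
    mem_latticeGroup_verticesBC.2 ⟨(mem_latticeGroup.1 hh).1, fun j => by
      rw [hhp, hhs, hht]
      split_ifs <;> simp [unitFraction_add_sub_one_smul]⟩
  have hg' : g ∈ latticeGroup (verticesBC s p q) :=
    mem_latticeGroup_verticesBC.2 ⟨(mem_latticeGroup.1 hg).1, fun j => by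
      rw [hgq, hgs, hgt]
      split_ifs <;> simp [unitFraction_add_sub_one_smul]⟩
  refine unimodEquiv_of_latticeGroup_le hV (fun x hx => ?_)
    (hcard ▸ hpq.mul_dvd_of_dvd_of_dvd (dvd_natCard_of_apply_eq_unitFraction hh' hp hhs)
      (dvd_natCard_of_apply_eq_unitFraction hg' hq hgt))
  obtain ⟨m, l, rfl⟩ := exists_eq_nsmul_add_nsmul_of_mem_latticeGroup_verticesBC hp hq hh' hg'
    hhs hht hgs hgt hx
  exact add_mem (nsmul_mem hh m) (nsmul_mem hg l)

end ExplicitSimplices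

section Assembly

lemma exists_perm_succ_mem_iff {d : ℕ} {A : Finset (Fin (d + 1))} {B : Finset (Fin d)}
    (h : B.card = A.card) : ∃ σ : Equiv.Perm (Fin (d + 1)), ∀ j : Fin d, σ j.succ ∈ A ↔ j ∈ B := by
  let f := Finset.equivOfCardEq ((Finset.card_map (Fin.succEmb d)).trans h)
  refine ⟨f.extendSubtype, fun j => ?_⟩
  have hj : (j.succ ∈ B.map (Fin.succEmb d)) ↔ j ∈ B := Finset.mem_map' _
  exact ⟨fun hσ => by_contra fun hB => f.extendSubtype_not_mem _ (mt hj.1 hB) hσ,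
    fun hB => f.extendSubtype_mem _ (hj.2 hB)⟩

variable {d c n q : ℕ} {V : Fin (d + 1) → Fin d → ℤ} {A : Finset (Fin (d + 1))}

lemma unimodEquiv_simplexA_of_const_mem (hV : AffineIndependent ℝ (realPoints V)) {N : ℕ}
    (hNc : 2 ≤ N * c) (hcard : Nat.card (latticeGroup V) = N) (hd : d + 1 = N * c)
    (hg : (fun _ => unitFraction N) ∈ latticeGroup V) :
    UnimodEquiv (latticeSimplex V)
      (simplexA fun i : Fin d => if (i : ℕ) < N * c - 2 then 1 else (N : ℤ)) := by
  obtain ⟨e, rfl⟩ : ∃ e, d = e + 1 := ⟨N * c - 2, by omega⟩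
  refine unimodEquiv_simplexA hV (Nat.pos_of_ne_zero (by rintro rfl; omega)) hcard ?_ hg fun j => ?_
  · rw [if_neg (by rw [Fin.val_last]; omega)]
  · cases j using Fin.lastCases with
    | last => rw [Function.update_self, one_smul]
    | cast j =>
      rw [Function.update_of_ne j.castSucc_ne_last, if_pos (by rw [Fin.val_castSucc]; omega),
        one_smul]

lemma unimodEquiv_simplexBC_of_twoValued_mem (hV : AffineIndependent ℝ (realPoints V))
    (hc : 0 < c) (hn : 0 < n) (hq : 0 < q) (hnq : n.Coprime q) (hnqc : 2 ≤ n * q * c)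
    (hcard : Nat.card (latticeGroup V) = n * q) (hd : d + 1 = n * c + n * q * c)
    (hA : A.card = n * c) (hh : twoValued A (unitFraction n) 0 ∈ latticeGroup V)
    (hg : twoValued A 0 (unitFraction q) ∈ latticeGroup V) :
    UnimodEquiv (latticeSimplex V) (simplexBC (n * c)
      (fun i : Fin (n * c) => if (i : ℕ) < n * c - 1 then 1 else (n : ℤ))
      (fun i : Fin d => if (i : ℕ) < n * c then (q : ℤ)
        else if (i : ℕ) < n * c + (n * q * c - 2) then 1 else (q : ℤ))) := by
  have hpos : 0 < n * c := Nat.mul_pos hn hc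
  obtain ⟨e, rfl⟩ : ∃ e, d = e + 1 := ⟨n * c + n * q * c - 2, by omega⟩
  obtain ⟨s, hs⟩ : ∃ s : Fin e, n * c = s + 1 := ⟨⟨n * c - 1, by omega⟩, by dsimp only; omega⟩
  obtain ⟨σ, hσ⟩ := exists_perm_succ_mem_iff (A := A) (B := Finset.Iic s.castSucc)
    (by rw [Fin.card_Iic, hA, hs, Fin.val_castSucc])
  simp only [Finset.mem_Iic] at hσ
  rw [hs, ← latticeSimplex_comp_perm V σ]
  refine unimodEquiv_simplexBC (hV.comp_embedding σ.toEmbedding) hn hq hnq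
    ((natCard_latticeGroup_comp_perm V σ).trans hcard) (fun i => rfl) (fun i => ?_)
    ((comp_perm_mem_latticeGroup_iff σ).2 hh) ((comp_perm_mem_latticeGroup_iff σ).2 hg)
    (fun j => if_congr (hσ j) rfl rfl) fun j => if_congr (hσ j) rfl rfl
  have hi := i.2
  simp only [Fin.le_def, Fin.ext_iff, Fin.val_castSucc, Fin.val_last]
  split_ifs <;> first | rfl | omega

lemma unimodEquiv_simplexA_of_twoValued_mem (hV : AffineIndependent ℝ (realPoints V))
    (hc : 0 < c) (hn : 0 < n) (hnq : 2 ≤ n * q)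
    (hcard : Nat.card (latticeGroup V) = n * q) (hd : d + 1 = n * c + (n * q - 1) * c)
    (hA : A.card = n * c)
    (hg : twoValued A (unitFraction (n * q)) (unitFraction q) ∈ latticeGroup V) :
    UnimodEquiv (latticeSimplex V) (simplexA fun i : Fin d =>
      if (i : ℕ) < n * c - 1 then 1
      else if (i : ℕ) < n * c - 1 + ((n * q - 1) * c - 1) then (n : ℤ) else (n * q : ℤ)) := by
  have hpos : 0 < n * c := Nat.mul_pos hn hc
  have hpos' : 0 < (n * q - 1) * c := Nat.mul_pos (by omega) hc
  obtain ⟨e, rfl⟩ : ∃ e, d = e + 1 := ⟨n * c + (n * q - 1) * c - 2, by omega⟩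
  obtain ⟨s, hs⟩ : ∃ s : Fin (e + 1), n * c = s + 1 :=
    ⟨⟨n * c - 1, by omega⟩, by dsimp only; omega⟩
  obtain ⟨σ, hσ⟩ := exists_perm_succ_mem_iff (A := A) (B := insert (Fin.last e) (Finset.Iio s)) (by
    rw [Finset.card_insert_of_notMem (by simpa using Fin.le_last s), Fin.card_Iio, hA, hs])
  simp only [Finset.mem_insert, Finset.mem_Iio] at hσ
  rw [← latticeSimplex_comp_perm V σ]
  refine unimodEquiv_simplexA (hV.comp_embedding σ.toEmbedding) (by omega)
    ((natCard_latticeGroup_comp_perm V σ).trans hcard) ?_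
    ((comp_perm_mem_latticeGroup_iff σ).2 hg) fun j => ?_
  · rw [Fin.val_last, if_neg (by omega), if_neg (by omega), Nat.cast_mul]
  · have hj := j.2
    refine (if_congr (hσ j) rfl rfl).trans ?_
    rw [Function.update_apply]
    by_cases hlast : j = Fin.last e
    · rw [if_pos (.inl hlast), if_pos hlast, one_smul]
    rw [if_neg hlast]
    rw [Fin.ext_iff, Fin.val_last] at hlast
    by_cases hjs : j < s
    · rw [if_pos (.inr hjs), if_pos (by omega), one_smul]
    · rw [if_neg (by rw [Fin.ext_iff, Fin.val_last]; tauto), if_neg (by omega),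
        if_pos (by omega), natCast_zsmul, nsmul_unitFraction_mul hn.ne']

theorem HasTwoValuedGenerators.unimodEquiv (hV : AffineIndependent ℝ (realPoints V))
    (hc : 0 < c) (hn : n.Prime) (hq : q.Prime) (hnq : n ≠ q)
    (hcard : Nat.card (latticeGroup V) = n * q)
    (h : HasTwoValuedGenerators (latticeGroup V) c n q) :
    (d = n * (q + 1) * c - 1 ∧ UnimodEquiv (latticeSimplex V) (simplexBC (n * c)
      (fun i : Fin (n * c) => if (i : ℕ) < n * c - 1 then 1 else (n : ℤ))
      (fun i : Fin d => if (i : ℕ) < n * c then (q : ℤ)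
        else if (i : ℕ) < n * c + (n * q * c - 2) then 1 else (q : ℤ)))) ∨
    (d = (n * q + n - 1) * c - 1 ∧ UnimodEquiv (latticeSimplex V) (simplexA fun i : Fin d =>
      if (i : ℕ) < n * c - 1 then 1
      else if (i : ℕ) < n * c - 1 + ((n * q - 1) * c - 1) then (n : ℤ) else (n * q : ℤ))) := by
  have hnq2 : 2 ≤ n * q := hn.two_le.trans (Nat.le_mul_of_pos_right n hq.pos)
  obtain ⟨A, hA, ⟨hd, hh, hg⟩ | ⟨hd, hg⟩⟩ := h <;> rw [Fintype.card_fin] at hd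
  · refine .inl ⟨?_, unimodEquiv_simplexBC_of_twoValued_mem hV hc hn.pos hq.pos
      ((Nat.coprime_primes hn hq).2 hnq) (hnq2.trans (Nat.le_mul_of_pos_right _ hc)) hcard
      (hd.trans (by ring)) hA hh hg⟩
    rw [← Nat.add_sub_cancel d 1, hd]
    ring_nf
  · refine .inr ⟨?_, unimodEquiv_simplexA_of_twoValued_mem hV hc hn.pos hnq2 hcard
      (hd.trans (by ring)) hA hg⟩
    rw [← Nat.add_sub_cancel d 1, hd, Nat.sub_add_comm (by omega), mul_comm]

end Assembly

theorem stmt_17 (p q k d : ℕ) (hp : p.Prime) (hq : q.Prime) (hpq : p ≠ q)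
    (Δ : Set (Fin d → ℝ))
    (hsimp : IsLatticeSimplex Δ)
    (hδ : HasDeltaPolySimplex d (p*q) k Δ)
    (hpyr : ¬ ∃ (e : ℕ) (h : d = e + 1) (Q : Set (Fin e → ℝ)),
      IsLatticeSimplex Q ∧
      UnimodEquiv ((fun x : Fin d → ℝ => x ∘ (finCongr h.symm)) '' Δ) (Pyr Q)) :
    (d = p*q*(k+1) - 1 ∧
      UnimodEquiv Δ (simplexA (fun i : Fin d =>
        if (i : ℕ) < p*q*(k+1) - 2 then 1 else (p*q : ℤ)))) ∨
    (d = p*(q+1)*(k+1) - 1 ∧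
      UnimodEquiv Δ (simplexBC (p*(k+1))
        (fun i : Fin (p*(k+1)) =>
          if (i : ℕ) < p*(k+1) - 1 then 1 else (p : ℤ))
        (fun i : Fin d =>
          if (i : ℕ) < p*(k+1) then (q : ℤ)
          else if (i : ℕ) < p*(k+1) + (p*q*(k+1) - 2) then 1
          else (q : ℤ)))) ∨
    (d = (p+1)*q*(k+1) - 1 ∧
      UnimodEquiv Δ (simplexBC (q*(k+1))
        (fun i : Fin (q*(k+1)) =>
          if (i : ℕ) < q*(k+1) - 1 then 1 else (q : ℤ))
        (fun i : Fin d =>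
          if (i : ℕ) < q*(k+1) then (p : ℤ)
          else if (i : ℕ) < q*(k+1) + (p*q*(k+1) - 2) then 1
          else (p : ℤ)))) ∨
    (d = (p*q + p - 1)*(k+1) - 1 ∧
      UnimodEquiv Δ (simplexA (fun i : Fin d =>
        if (i : ℕ) < p*(k+1) - 1 then 1
        else if (i : ℕ) < p*(k+1) - 1 + ((p*q - 1)*(k+1) - 1) then (p : ℤ)
        else (p*q : ℤ)))) ∨
    (d = (p*q + q - 1)*(k+1) - 1 ∧
      UnimodEquiv Δ (simplexA (fun i : Fin d =>
        if (i : ℕ) < q*(k+1) - 1 then 1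
        else if (i : ℕ) < q*(k+1) - 1 + ((p*q - 1)*(k+1) - 1) then (q : ℤ)
        else (p*q : ℤ)))) := by
  obtain ⟨V, hV, rfl⟩ := hsimp
  obtain ⟨e, he⟩ := exists_isHeightIndex hV hδ
  have hcard : Nat.card (latticeGroup V) = p * q := (Nat.card_congr e).trans (Nat.card_fin _)
  have hpq2 : 2 ≤ p * q := hp.two_le.trans (Nat.le_mul_of_pos_right p hq.pos)
  have := Fin.nontrivial_iff_two_le.2 hpq2
  have hfull := exists_mem_latticeGroup_apply_ne_zero hV e.nontrivial hpyr
  rcases he.classification hp hq hpq hfull with ⟨hd, hconst⟩ | hpq' | hqp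
  · rw [Fintype.card_fin] at hd
    have hA := unimodEquiv_simplexA_of_const_mem hV
      (hpq2.trans (Nat.le_mul_of_pos_right _ k.succ_pos)) hcard hd hconst
    rw [Nat.cast_mul] at hA
    exact .inl ⟨Nat.eq_sub_of_add_eq hd, hA⟩
  · rcases hpq'.unimodEquiv hV k.succ_pos hp hq hpq hcard with hBC | hA
    · exact .inr (.inl hBC)
    · exact .inr (.inr (.inr (.inl hA)))
  · rw [mul_comm p q] at hcard
    rcases hqp.unimodEquiv hV k.succ_pos hq hp hpq.symm hcard with hBC | hA
    · rw [mul_comm q (p + 1), mul_comm q p] at hBC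
      exact .inr (.inr (.inl hBC))
    · rw [mul_comm q p, mul_comm (q : ℤ) p] at hA
      exact .inr (.inr (.inr (.inr hA)))
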